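/- arXiv:1911.03707 — 2 statements merged into one kernel-verified Lean document; each statement's English description precedes it below -/
import Mathlib

section
/- The set of natural numbers n such that every coefficient a(n,i) of (q;q)_n lies in {-1, 0, 1} is exactly {0, 1, 2, 3, 5}. -/
open Polynomial

/-- `a n i` is the coefficient of `q^i` in `(q;q)_n = ∏_{k=1}^n (1 - q^k)` over `ℤ`. -/
noncomputable def a (n i : ℕ) : ℤ :=
  (∏ k ∈ Finset.Icc 1 n, (1 - (X : Polynomial ℤ) ^ k)).coeff i

/-- `M n` is the maximum of `|a n i|` over `0 ≤ i ≤ n(n+1)/2`. -/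
noncomputable def M (n : ℕ) : ℕ :=
  (Finset.range (n * (n + 1) / 2 + 1)).sup fun i => (a n i).natAbs

/-- `L n` is the least index `i` with `|a n i| = M n`. -/
noncomputable def L (n : ℕ) : ℕ :=
  sInf {i : ℕ | (a n i).natAbs = M n}


/-!
By Euler's identity `1 / (qⁿ⁺¹; q)_∞ = ∑ₘ q^((n+1)m) / (q; q)ₘ`, multiplied by `(q; q)_∞`,
`(q; q)ₙ = ∑ₘ q^((n+1)m) (qᵐ⁺¹; q)_∞`. Hence for `j ≤ n` the coefficient of `q^(2n+2+j)` in
`(q; q)ₙ` is the sum of one coefficient of each of `(q; q)_∞`, `(q²; q)_∞` and `(q³; q)_∞`, the last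
one at `q^j`. The first two series have coefficients in `{-1, 0, 1}`, by the pentagonal number
theorem; for `(q²; q)_∞ = (q; q)_∞ / (1 - q)` this is because the pentagonal exponents carry signs
`+ - - + + - - ⋯`. The coefficient of `q⁶⁹` in `(q³; q)_∞` is `4`, so `(q; q)ₙ` has a coefficient
at least `2` as soon as `69 ≤ n`; for the remaining `n` the first 120 coefficients decide.
-/

open Finset
open scoped PowerSeries PowerSeries.WithPiTopology

local notation "q" => PowerSeries.X

section QPochhammer

variable (R : Type*) [CommRing R]

/-- The finite `q`-Pochhammer symbol `(qᵐ⁺¹; q)_d = (1 - qᵐ⁺¹) ⋯ (1 - qᵐ⁺ᵈ)` as a power series. -/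
noncomputable def qPochhammer (m d : ℕ) : R⟦X⟧ :=
  ∏ k ∈ range d, (1 - q ^ (k + m + 1))

/-- The infinite `q`-Pochhammer symbol `(qᵐ⁺¹; q)_∞` as a power series; the exponent is shifted so
that `m = 0` is Euler's product. -/
noncomputable def qPochhammerInf [TopologicalSpace R] (m : ℕ) : R⟦X⟧ :=
  ∏' k, (1 - q ^ (k + m + 1))

lemma qPochhammer_succ (m d : ℕ) :
    qPochhammer R m (d + 1) = qPochhammer R m d * (1 - q ^ (d + m + 1)) :=
  prod_range_succ _ _

lemma coe_prod_Icc_one_sub_X_pow (n : ℕ) :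
    ((∏ k ∈ Icc 1 n, (1 - (X : R[X]) ^ k) : R[X]) : R⟦X⟧) = qPochhammer R 0 n := by
  induction n with
  | zero => simp [qPochhammer]
  | succ n ih =>
    rw [prod_Icc_succ_top (by omega), Polynomial.coe_mul, ih, qPochhammer_succ]
    simp

lemma X_pow_dvd_prod_one_sub_X_pow_sub_one (m : ℕ) (s : Finset ℕ) :
    (q ^ (m + 1) : R⟦X⟧) ∣ ∏ k ∈ s, (1 - q ^ (k + m + 1)) - 1 := by
  refine prod_induction _ (fun f : R⟦X⟧ ↦ q ^ (m + 1) ∣ f - 1) (fun f g hf hg ↦ ?_) (by simp)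
    fun k _ ↦ ?_
  · rw [show f * g - 1 = f * (g - 1) + (f - 1) by ring]
    exact dvd_add (hg.mul_left f) hf
  · rw [sub_sub_cancel_left, dvd_neg]
    exact pow_dvd_pow _ (by omega)

variable [TopologicalSpace R]

lemma multipliable_one_sub_X_pow_add (m : ℕ) :
    Multipliable fun k ↦ (1 - q ^ (k + m + 1) : R⟦X⟧) := by
  nontriviality R
  simp only [sub_eq_add_neg]
  refine PowerSeries.WithPiTopology.multipliable_one_add_of_tendsto_order_atTop_nhds_top R ?_
  simp only [PowerSeries.order_neg, PowerSeries.order_X_pow, add_assoc]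
  exact ENat.tendsto_natCast_nhds_top.comp (Filter.tendsto_add_atTop_nat _)

/-- The partial sum `∑_{m < M} q^((n+1)m) (qᵐ⁺¹; q)_∞` of Euler's expansion of `(q; q)ₙ`. -/
noncomputable def eulerSum (M n : ℕ) : R⟦X⟧ :=
  ∑ m ∈ range M, q ^ ((n + 1) * m) * qPochhammerInf R m

lemma X_pow_dvd_eulerSum_succ_sub_qPochhammerInf (M n : ℕ) :
    q ^ (n + 1) ∣ eulerSum R (M + 1) n - qPochhammerInf R 0 := by
  rw [eulerSum, sum_range_succ', mul_zero, pow_zero, one_mul, add_sub_cancel_right]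
  refine dvd_sum fun m _ ↦ Dvd.dvd.mul_right (pow_dvd_pow _ ?_) _
  exact Nat.le_mul_of_pos_right _ m.succ_pos

variable [T2Space R]

lemma X_pow_dvd_qPochhammerInf_sub_one (m : ℕ) : q ^ (m + 1) ∣ qPochhammerInf R m - 1 := by
  rw [PowerSeries.X_pow_dvd_iff]
  intro i hi
  have hlim := (PowerSeries.WithPiTopology.tendsto_iff_coeff_tendsto R _ _ _).1
    (multipliable_one_sub_X_pow_add R m).hasProd i
  have hconst : ∀ s : Finset ℕ, (∏ k ∈ s, (1 - q ^ (k + m + 1) : R⟦X⟧)).coeff i =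
      (1 : R⟦X⟧).coeff i := fun s ↦ by
    rw [← sub_eq_zero, ← map_sub]
    exact PowerSeries.X_pow_dvd_iff.1 (X_pow_dvd_prod_one_sub_X_pow_sub_one R m s) i hi
  simp only [hconst] at hlim
  rw [map_sub, sub_eq_zero]
  exact (tendsto_nhds_unique tendsto_const_nhds hlim).symm

lemma qPochhammerInf_zero : qPochhammerInf R 0 = PowerSeries.pentagonalSeries R :=
  PowerSeries.WithPiTopology.tprod_one_sub_X_pow R

variable [IsTopologicalRing R]

lemma qPochhammer_mul_qPochhammerInf (m d : ℕ) :
    qPochhammer R m d * qPochhammerInf R (d + m) = qPochhammerInf R m := by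
  simpa only [qPochhammer, qPochhammerInf, add_assoc] using
    Multipliable.prod_mul_tprod_nat_mul' (f := fun k ↦ (1 - q ^ (k + m + 1) : R⟦X⟧)) (k := d)
      (by simpa only [add_assoc] using multipliable_one_sub_X_pow_add R (d + m))

lemma one_sub_mul_qPochhammerInf (m : ℕ) :
    (1 - q ^ (m + 1)) * qPochhammerInf R (m + 1) = qPochhammerInf R m := by
  simpa [qPochhammer, add_comm] using qPochhammer_mul_qPochhammerInf R m 1

lemma X_pow_dvd_qPochhammerInf_sub_qPochhammer (m d : ℕ) :
    q ^ (d + m + 1) ∣ qPochhammerInf R m - qPochhammer R m d := by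
  rw [← qPochhammer_mul_qPochhammerInf R m d, ← mul_sub_one]
  exact (X_pow_dvd_qPochhammerInf_sub_one R (d + m)).mul_left _

lemma one_sub_mul_eulerSum_succ (M n : ℕ) :
    (1 - q ^ (n + 1)) * eulerSum R (M + 1) n =
      eulerSum R (M + 1) (n + 1) - q ^ ((n + 1) * (M + 1)) * qPochhammerInf R M := by
  induction M with
  | zero =>
    simp only [eulerSum, zero_add, sum_range_one, mul_zero, pow_zero, one_mul, mul_one]
    ring
  | succ M ih =>
    rw [eulerSum, sum_range_succ, ← eulerSum, mul_add, ih, eulerSum.eq_def R (M + 1 + 1) (n + 1),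
      sum_range_succ, ← eulerSum, ← one_sub_mul_qPochhammerInf R M]
    ring

/- Downward induction on `n`: passing from `n + 1` to `n` loses no precision, and for `n` large
compared with the precision only the first summand `(q; q)_∞` of the expansion matters. -/
lemma X_pow_min_dvd_eulerSum_succ_sub_qPochhammer (M d n : ℕ) :
    q ^ min (n + 1 + d) ((n + 1) * (M + 1)) ∣ eulerSum R (M + 1) n - qPochhammer R 0 n := by
  induction d generalizing n with
  | zero =>
    rw [← sub_add_sub_cancel _ (qPochhammerInf R 0)]
    exact (pow_dvd_pow _ (min_le_left _ _)).trans
      (dvd_add (X_pow_dvd_eulerSum_succ_sub_qPochhammerInf R M n)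
        (X_pow_dvd_qPochhammerInf_sub_qPochhammer R 0 n))
  | succ d ih =>
    have hunit : IsUnit (1 - q ^ (n + 1) : R⟦X⟧) := by
      simp [PowerSeries.isUnit_iff_constantCoeff]
    have hrec : (1 - q ^ (n + 1)) * (eulerSum R (M + 1) n - qPochhammer R 0 n) =
        eulerSum R (M + 1) (n + 1) - qPochhammer R 0 (n + 1) -
          q ^ ((n + 1) * (M + 1)) * qPochhammerInf R M := by
      rw [mul_sub, one_sub_mul_eulerSum_succ, qPochhammer_succ, add_zero]
      ring
    rw [← hunit.dvd_mul_left, hrec]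
    refine dvd_sub ((pow_dvd_pow _ (min_le_min ?_ ?_)).trans (ih (n + 1)))
      ((pow_dvd_pow _ (min_le_right _ _)).mul_right _)
    · omega
    · gcongr; omega

theorem X_pow_dvd_eulerSum_sub_qPochhammer (M n : ℕ) :
    q ^ ((n + 1) * M) ∣ eulerSum R M n - qPochhammer R 0 n := by
  cases M with
  | zero => simp
  | succ M =>
    refine (pow_dvd_pow _ (le_min ?_ le_rfl)).trans
      (X_pow_min_dvd_eulerSum_succ_sub_qPochhammer R M ((n + 1) * (M + 1)) n)
    exact Nat.le_add_left _ _

theorem coeff_qPochhammer_eq_sum {M n i : ℕ} (hi : i < (n + 1) * M) :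
    (qPochhammer R 0 n).coeff i = ∑ m ∈ range M,
      if (n + 1) * m ≤ i then (qPochhammerInf R m).coeff (i - (n + 1) * m) else 0 := by
  have hcoeff := PowerSeries.X_pow_dvd_iff.1 (X_pow_dvd_eulerSum_sub_qPochhammer R M n) i hi
  rw [map_sub, sub_eq_zero] at hcoeff
  simp only [← hcoeff, eulerSum, map_sum, PowerSeries.coeff_X_pow_mul']

lemma coeff_qPochhammer_two_mul_add {n j : ℕ} (hj : j ≤ n) :
    (qPochhammer R 0 n).coeff (2 * (n + 1) + j) =
      (qPochhammerInf R 0).coeff (2 * (n + 1) + j) + (qPochhammerInf R 1).coeff (n + 1 + j) +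
        (qPochhammerInf R 2).coeff j := by
  rw [coeff_qPochhammer_eq_sum R (M := 3) (by omega)]
  simp only [sum_range_succ, range_zero, sum_empty, zero_add]
  rw [if_pos (by omega), if_pos (by omega), if_pos (by omega)]
  congr! 4 <;> omega

lemma hasSum_qPochhammerInf_one :
    HasSum (fun k : ℕ ↦ (-1) ^ k * ∑ i ∈ Ico (pentagonal (-k)) (pentagonal (k + 1)), q ^ i)
      (qPochhammerInf R 1) := by
  have hinv := PowerSeries.mk_one_mul_one_sub_eq_one R
  have hsum := (PowerSeries.WithPiTopology.hasSum_pow_pentagonal_sub_pentagonalSeries R).mul_left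
    (PowerSeries.mk 1)
  rw [← qPochhammerInf_zero, ← one_sub_mul_qPochhammerInf, zero_add, pow_one, ← mul_assoc, hinv,
    one_mul] at hsum
  refine hsum.congr_fun fun k ↦ ?_
  rw [← geom_sum_Ico_mul_neg _ (pentagonal_neg_lt_pentagonal_add_one (Int.natCast_nonneg k)).le]
  linear_combination (-(-1) ^ k * ∑ i ∈ Ico (pentagonal (-k)) (pentagonal (k + 1)),
    (q : R⟦X⟧) ^ i) * hinv

end QPochhammer

section CoefficientBounds

lemma abs_coeff_qPochhammerInf_zero_le_one (i : ℕ) : |(qPochhammerInf ℤ 0).coeff i| ≤ 1 := by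
  rw [qPochhammerInf_zero]
  by_cases hi : i ∈ Set.range pentagonal
  · obtain ⟨k, rfl⟩ := hi
    rw [PowerSeries.coeff_pentagonalSeries_pentagonal]
    exact (Int.isUnit_iff_abs_eq.1 (Units.isUnit _)).le
  · simp [PowerSeries.coeff_pentagonalSeries_eq_zero ℤ hi]

lemma pentagonal_add_one_le_pentagonal_neg {k l : ℕ} (hkl : k < l) :
    pentagonal (k + 1) ≤ pentagonal (-l) :=
  (pentagonal_lt_pentagonal_neg (by omega)).le.trans <|
    pentagonal_strictAntiOn.antitoneOn (by simp) (by simp) (by omega)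

lemma eq_of_mem_Ico_pentagonal {k l i : ℕ} (hk : i ∈ Ico (pentagonal (-k)) (pentagonal (k + 1)))
    (hl : i ∈ Ico (pentagonal (-l)) (pentagonal (l + 1))) : k = l := by
  rw [mem_Ico] at hk hl
  by_contra hne
  rcases lt_or_gt_of_ne hne with hlt | hlt <;>
    have := pentagonal_add_one_le_pentagonal_neg hlt <;> omega

lemma abs_coeff_qPochhammerInf_one_le_one (i : ℕ) : |(qPochhammerInf ℤ 1).coeff i| ≤ 1 := by
  have hcoeff (k : ℕ) :
      ((-1) ^ k * ∑ j ∈ Ico (pentagonal (-k)) (pentagonal (k + 1)), q ^ j : ℤ⟦X⟧).coeff i =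
        if i ∈ Ico (pentagonal (-k)) (pentagonal (k + 1)) then (-1) ^ k else 0 := by
    rw [← map_one (PowerSeries.C (R := ℤ)), ← map_neg, ← map_pow, PowerSeries.coeff_C_mul]
    simp [PowerSeries.coeff_X_pow]
  have hsum := (PowerSeries.WithPiTopology.hasSum_iff_hasSum_coeff ℤ).1
    (hasSum_qPochhammerInf_one ℤ) i
  simp only [hcoeff] at hsum
  by_cases hi : ∃ k : ℕ, i ∈ Ico (pentagonal (-k)) (pentagonal (k + 1))
  · obtain ⟨k, hk⟩ := hi
    have hsingle := hasSum_single (f := fun l : ℕ ↦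
      if i ∈ Ico (pentagonal (-l)) (pentagonal (l + 1)) then (-1 : ℤ) ^ l else 0) k
      fun l hl ↦ if_neg fun hil ↦ hl (eq_of_mem_Ico_pentagonal hil hk)
    rw [hsum.unique hsingle, if_pos hk, abs_neg_one_pow]
  · push Not at hi
    simp only [hi, if_false] at hsum
    simp [hsum.unique hasSum_zero]

end CoefficientBounds

section Computation

/-- Multiplication by `1 - qᵏ` of a power series truncated to its first `l.length` coefficients,
encoded as the list `l` of these coefficients. -/
def mulOneSubXPow (k : ℕ) (l : List ℤ) : List ℤ :=
  List.zipWith (· - ·) l (List.replicate k 0 ++ l)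

/-- The list of the first `N` coefficients of `(qᵐ⁺¹; q)_d`, in a form the kernel can evaluate. -/
def qPochhammerList (N m : ℕ) : ℕ → List ℤ
  | 0 => (List.range N).map fun i ↦ if i = 0 then 1 else 0
  | d + 1 => mulOneSubXPow (d + m + 1) (qPochhammerList N m d)

lemma mulOneSubXPow_map_coeff (N k : ℕ) (f : ℤ⟦X⟧) :
    mulOneSubXPow k ((List.range N).map fun i ↦ f.coeff i) =
      (List.range N).map fun i ↦ (f * (1 - q ^ k)).coeff i := by
  refine List.ext_getElem (by simp [mulOneSubXPow]) fun i hi _ ↦ ?_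
  rcases lt_or_ge i k with hik | hik
  · simp [mulOneSubXPow, mul_sub, PowerSeries.coeff_mul_X_pow', hik, hik.not_ge]
  · simp [mulOneSubXPow, mul_sub, PowerSeries.coeff_mul_X_pow', hik]

lemma qPochhammerList_eq_map_coeff (N m d : ℕ) :
    qPochhammerList N m d = (List.range N).map fun i ↦ (qPochhammer ℤ m d).coeff i := by
  induction d with
  | zero => simp [qPochhammerList, qPochhammer, PowerSeries.coeff_one]
  | succ d ih => rw [qPochhammerList, ih, mulOneSubXPow_map_coeff, qPochhammer_succ]

lemma mem_qPochhammerList {N m d : ℕ} {x : ℤ} :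
    x ∈ qPochhammerList N m d ↔ ∃ i < N, (qPochhammer ℤ m d).coeff i = x := by
  simp [qPochhammerList_eq_map_coeff]

lemma coeff_qPochhammerInf_two_sixtyNine : (qPochhammerInf ℤ 2).coeff 69 = 4 := by
  have htrunc := PowerSeries.X_pow_dvd_iff.1 (X_pow_dvd_qPochhammerInf_sub_qPochhammer ℤ 2 67) 69
    (by norm_num)
  have hlist : (qPochhammerList 70 2 67)[69]? = some 4 := by decide +kernel
  rw [map_sub, sub_eq_zero] at htrunc
  simpa [qPochhammerList_eq_map_coeff, ← htrunc] using hlist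

end Computation

section Coefficients

lemma a_eq_coeff_qPochhammer (n i : ℕ) : a n i = (qPochhammer ℤ 0 n).coeff i := by
  rw [a, ← coe_prod_Icc_one_sub_X_pow, Polynomial.coeff_coe]

lemma a_eq_zero_of_sum_lt {n i : ℕ} (hi : ∑ k ∈ Icc 1 n, k < i) : a n i = 0 := by
  refine coeff_eq_zero_of_natDegree_lt (lt_of_le_of_lt ?_ hi)
  refine (natDegree_prod_le _ _).trans (sum_le_sum fun k _ ↦ ?_)
  compute_degree

lemma two_le_a_of_sixtyNine_le {n : ℕ} (hn : 69 ≤ n) : 2 ≤ a n (2 * (n + 1) + 69) := by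
  rw [a_eq_coeff_qPochhammer, coeff_qPochhammer_two_mul_add ℤ hn,
    coeff_qPochhammerInf_two_sixtyNine]
  have hzero := neg_le_of_abs_le (abs_coeff_qPochhammerInf_zero_le_one (2 * (n + 1) + 69))
  have hone := neg_le_of_abs_le (abs_coeff_qPochhammerInf_one_le_one (n + 1 + 69))
  linarith

lemma exists_one_lt_abs_a_of_lt_sixtyNine {n : ℕ} (hn : n < 69)
    (hmem : n ∉ ({0, 1, 2, 3, 5} : Finset ℕ)) : ∃ i, 1 < |a n i| := by
  have hlist : ∀ n < 69, n ∉ ({0, 1, 2, 3, 5} : Finset ℕ) →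
      ∃ x ∈ qPochhammerList 120 0 n, 1 < |x| := by decide +kernel
  obtain ⟨x, hx, hlt⟩ := hlist n hn hmem
  obtain ⟨i, -, rfl⟩ := mem_qPochhammerList.1 hx
  exact ⟨i, a_eq_coeff_qPochhammer n i ▸ hlt⟩

lemma abs_a_le_one {n : ℕ} (hmem : n ∈ ({0, 1, 2, 3, 5} : Finset ℕ)) (i : ℕ) : |a n i| ≤ 1 := by
  rcases lt_or_ge i 16 with hi | hi
  · have hlist : ∀ n ∈ ({0, 1, 2, 3, 5} : Finset ℕ), ∀ x ∈ qPochhammerList 16 0 n, |x| ≤ 1 := by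
      decide +kernel
    exact hlist n hmem _ (mem_qPochhammerList.2 ⟨i, hi, (a_eq_coeff_qPochhammer n i).symm⟩)
  · have hdeg : ∀ n ∈ ({0, 1, 2, 3, 5} : Finset ℕ), ∑ k ∈ Icc 1 n, k < 16 := by decide
    simp [a_eq_zero_of_sum_lt ((hdeg n hmem).trans_le hi)]

end Coefficients

/-- The set of `n` such that all coefficients of `(q;q)_n` lie in `{-1, 0, 1}`
is exactly `{0, 1, 2, 3, 5}`. -/
theorem stmt_3 :
    {n : ℕ | ∀ i : ℕ, a n i ∈ ({-1, 0, 1} : Set ℤ)} = ({0, 1, 2, 3, 5} : Set ℕ) := by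
  ext n
  have hcoeff (i : ℕ) : a n i ∈ ({-1, 0, 1} : Set ℤ) ↔ |a n i| ≤ 1 := by
    rw [Int.abs_le_one_iff]
    simp only [Set.mem_insert_iff, Set.mem_singleton_iff]
    tauto
  have hmem : n ∈ ({0, 1, 2, 3, 5} : Set ℕ) ↔ n ∈ ({0, 1, 2, 3, 5} : Finset ℕ) := by simp
  rw [Set.mem_ofPred_eq, hmem]
  simp only [hcoeff]
  refine ⟨fun h ↦ ?_, abs_a_le_one⟩
  by_contra hn
  rcases lt_or_ge n 69 with hlt | hge
  · obtain ⟨i, hi⟩ := exists_one_lt_abs_a_of_lt_sixtyNine hlt hn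
    exact (h i).not_gt hi
  · have htwo := two_le_a_of_sixtyNine_le hge
    have hle := (le_abs_self _).trans (h (2 * (n + 1) + 69))
    omega
end

section
/- For every even natural number n with 34 ≤ n ≤ 75000, the least index i with |a(n,i)| = M_n is i = ⌊n(n+1)/4⌋; that is, L(n) = ⌊n(n+1)/4⌋, and moreover |a(n, ⌈n(n+1)/4⌉)| = M_n as well. -/
open Polynomial

/-!
By the symmetry of `(q;q)_n` it suffices that `|a n i| < |a n i₀|` for all `i < i₀ = ⌊n(n+1)/4⌋`.

For `n ≥ 600`, put `F θ = ∏ k ≤ n, 2 sin (kθ/2)`. Up to sign, `a n i` is a cosine coefficient of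
`F`, so the inequality says that `∫₀^π F θ (cos (p₀θ/2) ± cos (pθ/2)) dθ > 0`, where `p₀ ≤ 1` and
`p ≥ p₀ + 2`. The first arch `[0, 2π/n]`, on which `F ≥ 0`, dominates this integral. There the
maximum of `F` is exponentially large, as one sees at `θ = 2π/N` with `N = n + ⌊n/4⌋ + 1`, where
reflecting `k ↦ N - k` turns `F` into `∏ k < N, 2 sin (πk/N) = N` divided by a short product.
Beyond the first arch `|F| ≤ exp (0.1605 n)`, because `log |2 sin (x/2)|` has a cosine polynomial of
degree 8 as a majorant.

For the remaining `n` the coefficients are the signed digits of a single integer, the value of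
`(q;q)_n` at a power of two.
-/

section Symmetry

open Finset

/-- The finite Euler product `(q;q)_n`, whose coefficients are the `a n i`. -/
noncomputable def eulerProd (n : ℕ) : ℤ[X] := ∏ k ∈ Icc 1 n, (1 - X ^ k)

/-- The `n`-th triangular number, which is the degree of `(q;q)_n`. -/
def triangular (n : ℕ) : ℕ := n * (n + 1) / 2

lemma coeff_eulerProd (n i : ℕ) : (eulerProd n).coeff i = a n i := rfl

lemma eulerProd_succ (n : ℕ) : eulerProd (n + 1) = eulerProd n * (1 - X ^ (n + 1)) :=
  prod_Icc_succ_top (by lia) _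

lemma two_mul_triangular (n : ℕ) : 2 * triangular n = n * (n + 1) :=
  Nat.mul_div_cancel' (Nat.even_mul_succ_self n).two_dvd

lemma sum_Icc_one_eq_triangular (n : ℕ) : ∑ k ∈ Icc 1 n, k = triangular n := by
  induction n with
  | zero => rfl
  | succ n ih =>
    rw [sum_Icc_succ_top (by lia), ih]
    linarith [two_mul_triangular n, two_mul_triangular (n + 1)]

lemma natDegree_one_sub_X_pow_le {R : Type*} [Ring R] (k : ℕ) :
    (1 - X ^ k : R[X]).natDegree ≤ k :=
  (natDegree_sub_le _ _).trans (by simpa using natDegree_X_pow_le k)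

lemma natDegree_prod_one_sub_X_pow_le {R : Type*} [CommRing R] (s : Finset ℕ) :
    (∏ k ∈ s, (1 - X ^ k : R[X])).natDegree ≤ ∑ k ∈ s, k :=
  (natDegree_prod_le _ _).trans (sum_le_sum fun k _ ↦ natDegree_one_sub_X_pow_le k)

lemma reflect_one_sub_X_pow {R : Type*} [Ring R] (k : ℕ) :
    reflect k (1 - X ^ k : R[X]) = -(1 - X ^ k) := by
  rw [reflect_sub, reflect_one, reflect_monomial, revAt_le le_rfl, Nat.sub_self, pow_zero,
    neg_sub]

lemma reflect_prod_one_sub_X_pow {R : Type*} [CommRing R] (s : Finset ℕ) :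
    reflect (∑ k ∈ s, k) (∏ k ∈ s, (1 - X ^ k : R[X])) = (-1) ^ #s * ∏ k ∈ s, (1 - X ^ k) := by
  induction s using Finset.induction_on with
  | empty => simp
  | insert k s hk ih =>
    rw [sum_insert hk, prod_insert hk, card_insert_of_notMem hk,
      reflect_mul _ _ (natDegree_one_sub_X_pow_le k) (natDegree_prod_one_sub_X_pow_le s), ih,
      reflect_one_sub_X_pow]
    ring

lemma natDegree_eulerProd_le (n : ℕ) : (eulerProd n).natDegree ≤ triangular n :=
  (natDegree_prod_one_sub_X_pow_le _).trans_eq (sum_Icc_one_eq_triangular n)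

lemma reflect_eulerProd (n : ℕ) :
    reflect (triangular n) (eulerProd n) = (-1) ^ n * eulerProd n := by
  simpa [eulerProd, sum_Icc_one_eq_triangular] using reflect_prod_one_sub_X_pow (R := ℤ) (Icc 1 n)

lemma a_triangular_sub {n : ℕ} (hn : Even n) {i : ℕ} (hi : i ≤ triangular n) :
    a n (triangular n - i) = a n i := by
  rw [← coeff_eulerProd, ← coeff_eulerProd, ← revAt_le hi, ← coeff_reflect, reflect_eulerProd,
    hn.neg_one_pow, one_mul]

lemma a_eq_zero_of_triangular_lt {n i : ℕ} (hi : triangular n < i) : a n i = 0 :=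
  coeff_eq_zero_of_natDegree_lt ((natDegree_eulerProd_le n).trans_lt hi)

/-- The coefficients below the middle index `⌊n(n+1)/4⌋` are strictly smaller in absolute value
than the middle one. By the symmetry of the coefficients this is what has to be proved. -/
def HasStrictCentralPeak (n : ℕ) : Prop :=
  ∀ i < n * (n + 1) / 4, |a n i| < |a n (n * (n + 1) / 4)|

lemma HasStrictCentralPeak.abs_le {n : ℕ} (hn : Even n) (h : HasStrictCentralPeak n) (i : ℕ) :
    |a n i| ≤ |a n (n * (n + 1) / 4)| := by
  have htri := two_mul_triangular n
  have of_le {j : ℕ} (hj : j ≤ n * (n + 1) / 4) : |a n j| ≤ |a n (n * (n + 1) / 4)| :=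
    hj.lt_or_eq.elim (fun hlt ↦ (h j hlt).le) fun heq ↦ by rw [heq]
  rcases le_or_gt i (n * (n + 1) / 4) with hi | hi
  · exact of_le hi
  rcases lt_or_ge (triangular n) i with hi' | hi'
  · simp [a_eq_zero_of_triangular_lt hi']
  · rcases le_or_gt (triangular n - i) (n * (n + 1) / 4) with hj | hj
    · exact a_triangular_sub hn hi' ▸ of_le hj
    · lia

lemma HasStrictCentralPeak.M_eq {n : ℕ} (hn : Even n) (h : HasStrictCentralPeak n) :
    M n = (a n (n * (n + 1) / 4)).natAbs := by
  refine le_antisymm (Finset.sup_le fun i _ ↦ ?_) ?_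
  · simpa only [Int.abs_eq_natAbs, Nat.cast_le] using h.abs_le hn i
  · exact le_sup (f := fun i ↦ (a n i).natAbs) (mem_range.2 (by lia))

lemma HasStrictCentralPeak.L_eq {n : ℕ} (hn : Even n) (h : HasStrictCentralPeak n) :
    L n = n * (n + 1) / 4 := by
  refine le_antisymm (Nat.sInf_le (h.M_eq hn).symm) (le_csInf ⟨_, (h.M_eq hn).symm⟩ ?_)
  intro i hi
  by_contra! hlt
  refine (h i hlt).ne ?_
  rw [Int.abs_eq_natAbs, Int.abs_eq_natAbs, ← h.M_eq hn, show (a n i).natAbs = M n from hi]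

lemma HasStrictCentralPeak.natAbs_a_ceil {n : ℕ} (hn : Even n) (h : HasStrictCentralPeak n) :
    (a n ((n * (n + 1) + 3) / 4)).natAbs = M n := by
  have htri := two_mul_triangular n
  have hceil : (n * (n + 1) + 3) / 4 = triangular n - n * (n + 1) / 4 := by lia
  rw [hceil, a_triangular_sub hn (by lia), h.M_eq hn]

end Symmetry

section IntegralRepresentation

open Finset Real

/-- The real product `∏_{k ≤ n} 2 sin (kθ/2)`; up to a unimodular factor it is the value of
`(q;q)_n` at `q = exp (iθ)`. -/
noncomputable def sineProd (n : ℕ) (θ : ℝ) : ℝ := ∏ k ∈ Icc 1 n, 2 * sin (k * θ / 2)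

@[fun_prop]
lemma continuous_sineProd (n : ℕ) : Continuous (sineProd n) := by
  unfold sineProd
  fun_prop

lemma one_sub_exp_I_mul (z : ℂ) :
    1 - Complex.exp (Complex.I * z) =
      -Complex.I * (2 * Complex.sin (z / 2)) * Complex.exp (Complex.I * (z / 2)) := by
  have hsq : Complex.exp (Complex.I * z) = Complex.exp (Complex.I * (z / 2)) ^ 2 := by
    rw [← Complex.exp_nat_mul]; ring_nf
  have hinv : Complex.exp (-(z / 2) * Complex.I) * Complex.exp (Complex.I * (z / 2)) = 1 := by
    rw [← Complex.exp_add]; ring_nf; exact Complex.exp_zero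
  rw [hsq, Complex.sin, mul_comm (z / 2) Complex.I]
  linear_combination Complex.I ^ 2 * hinv +
    (1 - Complex.exp (Complex.I * (z / 2)) ^ 2) * Complex.I_sq

lemma aeval_exp_eulerProd (n : ℕ) (θ : ℝ) :
    aeval (Complex.exp (Complex.I * θ)) (eulerProd n) =
      (-Complex.I) ^ n * sineProd n θ * Complex.exp (Complex.I * (triangular n * θ / 2)) := by
  have hfactor (k : ℕ) : aeval (Complex.exp (Complex.I * θ)) (1 - X ^ k : ℤ[X]) =
      -Complex.I * (2 * sin (k * θ / 2) : ℝ) * Complex.exp (k * (Complex.I * (θ / 2))) := by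
    have h := one_sub_exp_I_mul (k * θ)
    rw [mul_left_comm, Complex.exp_nat_mul] at h
    simp only [map_sub, map_one, map_pow, aeval_X, h]
    push_cast
    ring_nf
  rw [eulerProd, map_prod, prod_congr rfl fun k _ ↦ hfactor k, prod_mul_distrib,
    prod_mul_distrib, ← Complex.exp_sum, ← sum_mul, ← Nat.cast_sum, sum_Icc_one_eq_triangular,
    prod_const, Nat.card_Icc, Nat.add_sub_cancel, ← Complex.ofReal_prod, sineProd]
  congr 2
  ring

lemma neg_one_pow_mul_sineProd {n : ℕ} (hn : Even n) (θ : ℝ) :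
    (-1) ^ (n / 2) * sineProd n θ =
      ∑ i ∈ range (triangular n + 1), a n i * cos ((i - triangular n / 2) * θ) := by
  have hI : (-Complex.I) ^ n = ((-1) ^ (n / 2) : ℝ) := by
    nth_rw 1 [← Nat.two_mul_div_two_of_even hn]
    simp [pow_mul]
  have hterm (i : ℕ) : ((a n i * cos ((i - triangular n / 2) * θ) : ℝ) : ℂ).re =
      (a n i • Complex.exp (Complex.I * θ) ^ i *
        Complex.exp (-(Complex.I * (triangular n * θ / 2)))).re := by
    have hexp : (i : ℂ) * (Complex.I * θ) + -(Complex.I * (triangular n * θ / 2)) =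
        (((i - triangular n / 2) * θ : ℝ) : ℂ) * Complex.I := by push_cast; ring
    rw [← Complex.exp_nat_mul, zsmul_eq_mul, mul_assoc, ← Complex.exp_add, hexp,
      ← Complex.ofReal_intCast, Complex.re_ofReal_mul, Complex.exp_ofReal_mul_I_re,
      Complex.ofReal_re]
  have hval : (((-1) ^ (n / 2) * sineProd n θ : ℝ) : ℂ) =
      aeval (Complex.exp (Complex.I * θ)) (eulerProd n) *
        Complex.exp (-(Complex.I * (triangular n * θ / 2))) := by
    rw [aeval_exp_eulerProd, hI, mul_assoc, ← Complex.exp_add, add_neg_cancel, Complex.exp_zero,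
      mul_one, ← Complex.ofReal_mul]
  rw [aeval_eq_sum_range' (Nat.lt_succ_of_le (natDegree_eulerProd_le n)), sum_mul] at hval
  simpa only [Complex.ofReal_re, Complex.re_sum, coeff_eulerProd, ← hterm] using
    congrArg Complex.re hval

lemma integral_cos_int_mul (k : ℤ) :
    ∫ θ in 0..π, cos (k * θ) = if k = 0 then π else 0 := by
  split_ifs with hk
  · simp [hk]
  · rw [intervalIntegral.integral_comp_mul_left (fun x ↦ cos x) (by exact_mod_cast hk)]
    simp [sin_int_mul_pi]

lemma integral_cos_mul_cos (i j N : ℤ) :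
    ∫ θ in 0..π, cos ((i - N / 2) * θ) * cos ((N / 2 - j) * θ) =
      ((if i = j then π else 0) + if i = N - j then π else 0) / 2 := by
  have hcos (θ : ℝ) : cos ((i - N / 2) * θ) * cos ((N / 2 - j) * θ) =
      (cos ((i - j : ℤ) * θ) + cos ((i - (N - j) : ℤ) * θ)) / 2 := by
    have hsub : ((i - j : ℤ) : ℝ) * θ = (i - N / 2) * θ + (N / 2 - j) * θ := by push_cast; ring
    have hadd : ((i - (N - j) : ℤ) : ℝ) * θ = (i - N / 2) * θ - (N / 2 - j) * θ := by
      push_cast; ring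
    rw [hsub, hadd, cos_add, cos_sub]
    ring
  simp only [hcos]
  rw [intervalIntegral.integral_div, intervalIntegral.integral_add
    (Continuous.intervalIntegrable (by fun_prop) _ _)
    (Continuous.intervalIntegrable (by fun_prop) _ _), integral_cos_int_mul, integral_cos_int_mul]
  simp only [sub_eq_zero]

theorem integral_sineProd_mul_cos {n : ℕ} (hn : Even n) {j : ℕ} (hj : j ≤ triangular n) :
    ∫ θ in 0..π, sineProd n θ * cos ((triangular n / 2 - j) * θ) = (-1) ^ (n / 2) * π * a n j := by
  have hsum (θ : ℝ) : sineProd n θ * cos ((triangular n / 2 - j) * θ) =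
      ∑ i ∈ range (triangular n + 1), (-1) ^ (n / 2) * a n i *
        (cos ((i - triangular n / 2) * θ) * cos ((triangular n / 2 - j) * θ)) := by
    have hsign : (-1 : ℝ) ^ (n / 2) * (-1) ^ (n / 2) = 1 := by rw [← mul_pow]; simp
    have h := neg_one_pow_mul_sineProd hn θ
    calc _ = (-1) ^ (n / 2) * ((-1) ^ (n / 2) * sineProd n θ) *
          cos ((triangular n / 2 - j) * θ) := by rw [← mul_assoc, hsign, one_mul]
      _ = _ := by
        rw [h, mul_sum, sum_mul]
        exact sum_congr rfl fun i _ ↦ by ring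
  have hterm : ∀ i ∈ range (triangular n + 1),
      ∫ θ in 0..π, (-1) ^ (n / 2) * a n i *
        (cos ((i - triangular n / 2) * θ) * cos ((triangular n / 2 - j) * θ)) =
      (if i = j then (-1) ^ (n / 2) * a n i * (π / 2) else 0) +
        if i = triangular n - j then (-1) ^ (n / 2) * a n i * (π / 2) else 0 := by
    intro i _
    have h := integral_cos_mul_cos i j (triangular n)
    simp only [Int.cast_natCast, Nat.cast_inj, ← Nat.cast_sub hj] at h
    rw [intervalIntegral.integral_const_mul, h]
    split_ifs <;> ring
  simp only [hsum]
  rw [intervalIntegral.integral_finsetSum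
      fun i _ ↦ Continuous.intervalIntegrable (by fun_prop) _ _,
    sum_congr rfl hterm, sum_add_distrib, sum_ite_eq', sum_ite_eq',
    if_pos (mem_range.2 (by lia)), if_pos (mem_range.2 (by lia)), a_triangular_sub hn hj]
  ring

end IntegralRepresentation

section KroneckerSubstitution

open Finset

/-- The absolute value of `(q;q)_n` at `q = 2 ^ B`. For large `B` all coefficients of `(q;q)_n` can
be read off from its digits in base `2 ^ B` (Kronecker substitution). -/
def kroneckerEval (B : ℕ) : ℕ → ℕ
  | 0 => 1
  | k + 1 => kroneckerEval B k <<< (B * (k + 1)) - kroneckerEval B k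

/-- The number whose `len` digits in base `2 ^ B` are all `1`. -/
def repunit (B len : ℕ) : ℕ := ((2 ^ B) ^ len - 1) / (2 ^ B - 1)

/-- The absolute value of the `j`-th signed digit of `W` in base `2 ^ (b + 2)`: adding `2 ^ (b + 1)`
to each of the `len` digits makes them nonnegative. -/
def signedDigitAbs (b len j W : ℕ) : ℕ :=
  Nat.dist (2 ^ (b + 1)) (((2 ^ (b + 1) * repunit (b + 2) len + W) &&&
    (2 ^ (b + 2) - 1) * (2 ^ (b + 2)) ^ j) / (2 ^ (b + 2)) ^ j)

/-- A test that the first `j` signed digits of `W` in base `2 ^ (b + 2)` have absolute value less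
than `c`: the `i`-th digit `f` satisfies `± f < c` iff the top bit of `2 ^ (b + 1) - c ± f` is `0`,
and these bits are tested for all `i < j` at once. -/
def SignedDigitsLT (b len j W c : ℕ) : Prop :=
  ((2 ^ (b + 1) - c) * repunit (b + 2) len + W) &&& 2 ^ (b + 1) * repunit (b + 2) j = 0 ∧
    ((2 ^ (b + 1) - c) * repunit (b + 2) len - W) &&& 2 ^ (b + 1) * repunit (b + 2) j = 0

/-- A test that `n` has a strict central peak of height at most `2 ^ b / 4`; it is conclusive if all
coefficients are known to be at most `2 ^ b`. -/
def PeakCertificate (b n : ℕ) : Prop :=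
  4 * signedDigitAbs b (triangular n + 1) (n * (n + 1) / 4) (kroneckerEval (b + 2) n) ≤ 2 ^ b ∧
    SignedDigitsLT b (triangular n + 1) (n * (n + 1) / 4) (kroneckerEval (b + 2) n)
      (signedDigitAbs b (triangular n + 1) (n * (n + 1) / 4) (kroneckerEval (b + 2) n))

instance (b n : ℕ) : Decidable (PeakCertificate b n) := by
  unfold PeakCertificate SignedDigitsLT
  infer_instance

lemma kroneckerEval_succ (B n : ℕ) :
    (kroneckerEval B (n + 1) : ℤ) = kroneckerEval B n * ((2 ^ B) ^ (n + 1) - 1) := by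
  have hle : kroneckerEval B n ≤ kroneckerEval B n * 2 ^ (B * (n + 1)) :=
    Nat.le_mul_of_pos_right _ (by positivity)
  rw [kroneckerEval, Nat.shiftLeft_eq, Nat.cast_sub hle]
  push_cast
  ring

lemma kroneckerEval_eq_eval (B n : ℕ) :
    (kroneckerEval B n : ℤ) = (-1) ^ n * (eulerProd n).eval (2 ^ B) := by
  induction n with
  | zero => simp [kroneckerEval, eulerProd]
  | succ n ih =>
    rw [kroneckerEval_succ, ih, eulerProd_succ, eval_mul, eval_sub, eval_one, eval_pow, eval_X]
    ring

lemma kroneckerEval_eq_sum {n : ℕ} (hn : Even n) (B : ℕ) :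
    (kroneckerEval B n : ℤ) = ∑ i ∈ range (triangular n + 1), a n i * (2 ^ B) ^ i := by
  rw [kroneckerEval_eq_eval, hn.neg_one_pow, one_mul,
    eval_eq_sum_range' (Nat.lt_succ_of_le (natDegree_eulerProd_le n))]
  rfl

lemma repunit_eq_sum {B : ℕ} (hB : B ≠ 0) (len : ℕ) :
    repunit B len = ∑ i ∈ range len, (2 ^ B) ^ i :=
  (Nat.geomSum_eq (Nat.one_lt_two_pow hB) len).symm

lemma sum_mul_pow_lt {K : ℕ} {d : ℕ → ℕ} (hd : ∀ i, d i < K) (len : ℕ) :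
    ∑ i ∈ range len, d i * K ^ i < K ^ len := by
  induction len with
  | zero => simp
  | succ k ih =>
    rw [sum_range_succ]
    calc _ < (d k + 1) * K ^ k := by linarith
      _ ≤ K * K ^ k := Nat.mul_le_mul_right _ (hd k)
      _ = K ^ (k + 1) := (pow_succ' K k).symm

lemma sum_mul_pow_div_mod {K : ℕ} {d : ℕ → ℕ} (hd : ∀ i, d i < K) {j len : ℕ} (hj : j < len) :
    (∑ i ∈ range len, d i * K ^ i) / K ^ j % K = d j := by
  obtain ⟨r, rfl⟩ : ∃ r, len = j + 1 + r := ⟨len - (j + 1), by lia⟩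
  have hK : 0 < K := (Nat.zero_le _).trans_lt (hd j)
  have hsplit : ∑ i ∈ range (j + 1 + r), d i * K ^ i = ∑ i ∈ range j, d i * K ^ i +
      K ^ j * (d j + K * ∑ i ∈ range r, d (j + 1 + i) * K ^ i) := by
    rw [sum_range_add, sum_range_succ, mul_add, mul_sum, mul_sum, add_assoc, mul_comm (d j)]
    congr 2
    exact sum_congr rfl fun i _ ↦ by ring
  rw [hsplit, Nat.add_mul_div_left _ _ (by positivity), Nat.div_eq_of_lt (sum_mul_pow_lt hd j),
    zero_add, Nat.add_mul_mod_self_left, Nat.mod_eq_of_lt (hd j)]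

lemma testBit_sum_mul_two_pow {B : ℕ} {d : ℕ → ℕ} (hd : ∀ i, d i < 2 ^ B) {j len : ℕ}
    (hj : j < len) {r : ℕ} (hr : r < B) :
    (∑ i ∈ range len, d i * (2 ^ B) ^ i).testBit (r + B * j) = (d j).testBit r := by
  rw [← sum_mul_pow_div_mod hd hj, ← pow_mul, Nat.testBit_mod_two_pow, Nat.testBit_div_two_pow]
  simp [hr]

lemma lt_two_pow_of_land_eq_zero {B len j : ℕ} {d : ℕ → ℕ} (hd : ∀ i, d i < 2 ^ (B + 1))
    (hj : j ≤ len)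
    (h : (∑ i ∈ range len, d i * (2 ^ (B + 1)) ^ i) &&& 2 ^ B * repunit (B + 1) j = 0)
    {i : ℕ} (hi : i < j) : d i < 2 ^ B := by
  by_contra! hle
  have hbit := congrArg (Nat.testBit · (B + (B + 1) * i)) h
  rw [repunit_eq_sum B.succ_ne_zero, mul_sum] at hbit
  simp only [Nat.testBit_and, Nat.zero_testBit] at hbit
  rw [testBit_sum_mul_two_pow hd (hi.trans_le hj) B.lt_succ_self,
    testBit_sum_mul_two_pow (d := fun _ ↦ 2 ^ B) (fun _ ↦ Nat.pow_lt_pow_succ one_lt_two) hi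
      B.lt_succ_self,
    Nat.testBit_two_pow_self, Nat.testBit_of_two_pow_le_and_two_pow_add_one_gt hle (hd i)] at hbit
  contradiction

section SignedDigits

variable {b len W j : ℕ} {f : ℕ → ℤ}

lemma mul_repunit_add_eq_sum {B s : ℕ} (hB : B ≠ 0) (hs : ∀ i, -(s : ℤ) ≤ f i)
    (hW : (W : ℤ) = ∑ i ∈ range len, f i * (2 ^ B) ^ i) :
    s * repunit B len + W = ∑ i ∈ range len, (s + f i).toNat * (2 ^ B) ^ i := by
  zify
  rw [hW, repunit_eq_sum hB, Nat.cast_sum, mul_sum, ← sum_add_distrib]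
  refine sum_congr rfl fun i _ ↦ ?_
  rw [Int.toNat_of_nonneg (by linarith [hs i]), add_mul]
  push_cast
  rfl

lemma mul_repunit_sub_eq_sum {B s : ℕ} (hB : B ≠ 0) (hs : ∀ i, f i ≤ s)
    (hW : (W : ℤ) = ∑ i ∈ range len, f i * (2 ^ B) ^ i) :
    s * repunit B len - W = ∑ i ∈ range len, (s - f i).toNat * (2 ^ B) ^ i := by
  refine Nat.sub_eq_of_eq_add ?_
  zify
  rw [hW, repunit_eq_sum hB, Nat.cast_sum, mul_sum, ← sum_add_distrib]
  refine sum_congr rfl fun i _ ↦ ?_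
  rw [Int.toNat_of_nonneg (by linarith [hs i])]
  push_cast
  ring

lemma signedDigitAbs_eq_natAbs (hf : ∀ i, |f i| ≤ 2 ^ b)
    (hW : (W : ℤ) = ∑ i ∈ range len, f i * (2 ^ (b + 2)) ^ i) (hj : j < len) :
    signedDigitAbs b len j W = (f j).natAbs := by
  have hshift (i : ℕ) : -((2 ^ (b + 1) : ℕ) : ℤ) ≤ f i := by
    push_cast
    linarith [(abs_le.1 (hf i)).1, pow_succ (2 : ℤ) b, pow_pos (zero_lt_two' ℤ) b]
  have hdigit (i : ℕ) : (((2 ^ (b + 1) : ℕ) : ℤ) + f i).toNat < 2 ^ (b + 2) := by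
    rw [Int.toNat_lt (by linarith [hshift i])]
    push_cast
    linarith [(abs_le.1 (hf i)).2, pow_succ (2 : ℤ) b, pow_succ (2 : ℤ) (b + 1),
      pow_pos (zero_lt_two' ℤ) b]
  unfold signedDigitAbs
  rw [mul_repunit_add_eq_sum (by lia) hshift hW, ← pow_mul, Nat.and_div_two_pow,
    Nat.mul_div_cancel _ (by positivity), Nat.and_two_pow_sub_one_eq_mod, pow_mul,
    sum_mul_pow_div_mod hdigit hj, Nat.dist]
  have hshift_j := hshift j
  generalize 2 ^ (b + 1) = s at hshift_j ⊢
  lia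

lemma SignedDigitsLT.abs_lt {c : ℕ} (h : SignedDigitsLT b len j W c)
    (hf : ∀ i, |f i| ≤ 2 ^ b) (hW : (W : ℤ) = ∑ i ∈ range len, f i * (2 ^ (b + 2)) ^ i)
    (hc : c ≤ 2 ^ b) (hj : j ≤ len) {i : ℕ} (hi : i < j) : |f i| < c := by
  obtain ⟨hadd, hsub⟩ := h
  have hpow₁ : (2 : ℤ) ^ (b + 1) = 2 * 2 ^ b := by ring
  have hpow₂ : (2 : ℤ) ^ (b + 2) = 4 * 2 ^ b := by ring
  have hs : ((2 ^ (b + 1) - c : ℕ) : ℤ) = 2 * 2 ^ b - c := by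
    rw [Nat.cast_sub (hc.trans (Nat.pow_le_pow_right two_pos b.le_succ))]
    push_cast
    rw [hpow₁]
  zify at hc
  have hdigit (x : ℤ) (hx : |x| ≤ 2 ^ b) :
      (((2 ^ (b + 1) - c : ℕ) : ℤ) + x).toNat < 2 ^ (b + 2) := by
    rw [hs, Int.toNat_lt (by linarith [(abs_le.1 hx).1])]
    push_cast
    linarith [(abs_le.1 hx).2, pow_pos (zero_lt_two' ℤ) b]
  rw [mul_repunit_add_eq_sum (by lia) (fun i ↦ by linarith [(abs_le.1 (hf i)).1]) hW] at hadd
  rw [mul_repunit_sub_eq_sum (by lia) (fun i ↦ by linarith [(abs_le.1 (hf i)).2]) hW] at hsub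
  have hlt_add := lt_two_pow_of_land_eq_zero (fun i ↦ hdigit _ (hf i)) hj hadd hi
  have hlt_sub := lt_two_pow_of_land_eq_zero
    (fun i ↦ sub_eq_add_neg (G := ℤ) _ _ ▸ hdigit _ ((abs_neg _).trans_le (hf i))) hj hsub hi
  rw [hs, Int.toNat_lt (by linarith [(abs_le.1 (hf i)).1])] at hlt_add
  rw [hs, Int.toNat_lt (by linarith [(abs_le.1 (hf i)).2])] at hlt_sub
  push_cast at hlt_add hlt_sub
  rw [_root_.abs_lt]
  constructor <;> linarith

end SignedDigits

variable {b n : ℕ}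

lemma PeakCertificate.hasStrictCentralPeak (h : PeakCertificate b n) (hn : Even n)
    (ha : ∀ i, |a n i| ≤ 2 ^ b) : HasStrictCentralPeak n := by
  have htri := two_mul_triangular n
  have hle := h.1
  intro i hi
  have hlt := h.2.abs_lt ha (kroneckerEval_eq_sum hn _) (by lia) (by lia) hi
  rwa [signedDigitAbs_eq_natAbs ha (kroneckerEval_eq_sum hn _) (by lia), ← Int.abs_eq_natAbs]
    at hlt

lemma PeakCertificate.four_mul_abs_le (h : PeakCertificate b n) (hn : Even n)
    (ha : ∀ i, |a n i| ≤ 2 ^ b) (i : ℕ) : 4 * |a n i| ≤ 2 ^ b := by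
  have htri := two_mul_triangular n
  have hle := h.1
  rw [signedDigitAbs_eq_natAbs ha (kroneckerEval_eq_sum hn _) (by lia)] at hle
  zify at hle
  linarith [(h.hasStrictCentralPeak hn ha).abs_le hn i]

end KroneckerSubstitution

section SmallCases

open Finset

lemma abs_a_succ_le {n : ℕ} {C : ℤ} (h : ∀ i, |a n i| ≤ C) (i : ℕ) : |a (n + 1) i| ≤ 2 * C := by
  have hi := h i
  have hC : 0 ≤ C := (abs_nonneg _).trans hi
  rw [← coeff_eulerProd, eulerProd_succ, mul_sub, mul_one, coeff_sub, coeff_mul_X_pow']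
  simp only [coeff_eulerProd]
  split_ifs with hle
  · linarith [abs_sub (a n i) (a n (i - (n + 1))), h (i - (n + 1))]
  · rw [sub_zero]
    linarith

lemma abs_a_le_two_pow (n i : ℕ) : |a n i| ≤ 2 ^ n := by
  induction n generalizing i with
  | zero =>
    rw [← coeff_eulerProd, eulerProd, Icc_eq_empty_of_lt one_pos, prod_empty, coeff_one]
    split_ifs <;> simp
  | succ n ih => simpa only [pow_succ'] using abs_a_succ_le ih i

lemma abs_a_le_of_peakCertificate {b lo cnt : ℕ} (hlo : Even lo)
    (h : ∀ m < cnt, PeakCertificate b (lo + 2 * m)) (ha : ∀ i, |a lo i| ≤ 2 ^ b)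
    {m : ℕ} (hm : m ≤ cnt) (i : ℕ) : |a (lo + 2 * m) i| ≤ 2 ^ b := by
  induction m generalizing i with
  | zero => exact ha i
  | succ m ih =>
    have hprev := (h m (by lia)).four_mul_abs_le (hlo.add (even_two_mul m)) (ih (by lia))
    have hC (i : ℕ) : |a (lo + 2 * m) i| ≤ 2 ^ b / 4 := by have := hprev i; lia
    have hnext := abs_a_succ_le (abs_a_succ_le hC) i
    rw [show lo + 2 * (m + 1) = lo + 2 * m + 1 + 1 by ring]
    lia

lemma hasStrictCentralPeak_of_peakCertificate {b lo cnt : ℕ} (hlo : Even lo)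
    (h : ∀ m < cnt, PeakCertificate b (lo + 2 * m)) (ha : ∀ i, |a lo i| ≤ 2 ^ b)
    {m : ℕ} (hm : m < cnt) : HasStrictCentralPeak (lo + 2 * m) :=
  (h m hm).hasStrictCentralPeak (hlo.add (even_two_mul m))
    (abs_a_le_of_peakCertificate hlo h ha hm.le)

lemma peakCertificate_34_to_532 : ∀ m < 250, PeakCertificate 154 (34 + 2 * m) := by
  decide +kernel

lemma peakCertificate_534_to_600 : ∀ m < 34, PeakCertificate 170 (534 + 2 * m) := by
  decide +kernel

theorem hasStrictCentralPeak_of_le_600 {n : ℕ} (hn : Even n) (hn₁ : 34 ≤ n) (hn₂ : n ≤ 600) :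
    HasStrictCentralPeak n := by
  have ha₃₄ (i : ℕ) : |a 34 i| ≤ 2 ^ 154 := (abs_a_le_two_pow 34 i).trans (by norm_num)
  have ha₅₃₄ (i : ℕ) : |a 534 i| ≤ 2 ^ 170 :=
    (abs_a_le_of_peakCertificate (by decide) peakCertificate_34_to_532 ha₃₄ le_rfl i).trans
      (by norm_num)
  obtain ⟨k, rfl⟩ := hn
  rcases lt_or_ge k 267 with hk | hk
  · obtain ⟨m, rfl⟩ := Nat.exists_eq_add_of_le (show 17 ≤ k by lia)
    rw [show 17 + m + (17 + m) = 34 + 2 * m by ring]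
    exact hasStrictCentralPeak_of_peakCertificate (by decide) peakCertificate_34_to_532 ha₃₄
      (by lia)
  · obtain ⟨m, rfl⟩ := Nat.exists_eq_add_of_le hk
    rw [show 267 + m + (267 + m) = 534 + 2 * m by ring]
    exact hasStrictCentralPeak_of_peakCertificate (by decide) peakCertificate_534_to_600 ha₅₃₄
      (by lia)

end SmallCases

section TrigonometricBounds

open Real

lemma nonneg_of_hasDerivAt_nonneg {f f' : ℝ → ℝ} {b x : ℝ} (hf : ∀ y, HasDerivAt f (f' y) y)
    (h₀ : f 0 = 0) (hf' : ∀ y, 0 < y → y < b → 0 ≤ f' y) (hx : 0 ≤ x) (hxb : x ≤ b) :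
    0 ≤ f x := by
  have hmono : MonotoneOn f (Set.Icc 0 b) :=
    monotoneOn_of_hasDerivWithinAt_nonneg (convex_Icc 0 b)
      (fun y _ ↦ (hf y).continuousAt.continuousWithinAt) (fun y _ ↦ (hf y).hasDerivWithinAt)
      fun y hy ↦ by
        rw [interior_Icc] at hy
        exact hf' y hy.1 hy.2
  exact h₀.symm.trans_le (hmono ⟨le_rfl, hx.trans hxb⟩ ⟨hx, hxb⟩ hx)

lemma seven_mul_mul_cos_le {x : ℝ} (hx : 0 ≤ x) (hxπ : x ≤ π) :
    7 * x * cos x ≤ sin x * (7 + x ^ 2) := by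
  rw [← sub_nonneg]
  rcases le_or_gt x (π / 2) with h | h
  · refine nonneg_of_hasDerivAt_nonneg (f := fun x ↦ sin x * (7 + x ^ 2) - 7 * x * cos x)
      (f' := fun x ↦ x * (x * cos x + 9 * sin x)) (fun y ↦ ?_) (by simp) (fun y hy₀ hy ↦ ?_) hx h
    · refine (((hasDerivAt_sin y).mul ((hasDerivAt_pow 2 y).const_add 7)).sub
        (((hasDerivAt_id y).const_mul 7).mul (hasDerivAt_cos y))).congr_deriv ?_
      simp only [id, Nat.cast_ofNat]
      ring
    · have hcos := cos_nonneg_of_neg_pi_div_two_le_of_le (x := y) (by linarith) hy.le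
      have hsin := sin_nonneg_of_nonneg_of_le_pi hy₀.le (by linarith)
      positivity
  · have hcos := cos_nonpos_of_pi_div_two_le_of_le h.le (by linarith)
    have hsin := sin_nonneg_of_nonneg_of_le_pi hx hxπ
    have hmul : 7 * x * cos x ≤ 0 := mul_nonpos_of_nonneg_of_nonpos (by positivity) hcos
    have hmul' : 0 ≤ sin x * (7 + x ^ 2) := by positivity
    linarith

lemma cos_mul_le_sin_mul {x : ℝ} (hx : 0 ≤ x) (hxπ : x ≤ π) :
    cos x * (15 * x + x ^ 3) ≤ sin x * (15 - 4 * x ^ 2) := by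
  rw [← sub_nonneg]
  refine nonneg_of_hasDerivAt_nonneg
    (f := fun x ↦ sin x * (15 - 4 * x ^ 2) - cos x * (15 * x + x ^ 3))
    (f' := fun x ↦ x * (sin x * (7 + x ^ 2) - 7 * x * cos x)) (fun y ↦ ?_) (by simp)
    (fun y hy₀ hy ↦ mul_nonneg hy₀.le (sub_nonneg.2 (seven_mul_mul_cos_le hy₀.le hy.le))) hx hxπ
  refine (((hasDerivAt_sin y).mul (((hasDerivAt_pow 2 y).const_mul 4).const_sub 15)).sub
    ((hasDerivAt_cos y).mul
      (((hasDerivAt_id y).const_mul 15).add (hasDerivAt_pow 3 y)))).congr_deriv ?_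
  simp only [id, Pi.add_apply, Nat.cast_ofNat]
  ring

lemma mul_cos_le_sin_mul {x : ℝ} (hx : 0 ≤ x) (hxπ : x ≤ π) :
    x * cos x ≤ sin x * (1 - x ^ 2 / 3 - x ^ 4 / 45) := by
  rw [← sub_nonneg]
  refine nonneg_of_hasDerivAt_nonneg
    (f := fun x ↦ sin x * (1 - x ^ 2 / 3 - x ^ 4 / 45) - x * cos x)
    (f' := fun x ↦ x / 45 * (sin x * (15 - 4 * x ^ 2) - cos x * (15 * x + x ^ 3)))
    (fun y ↦ ?_) (by simp)
    (fun y hy₀ hy ↦ mul_nonneg (by positivity) (sub_nonneg.2 (cos_mul_le_sin_mul hy₀.le hy.le)))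
    hx hxπ
  refine (((hasDerivAt_sin y).mul ((((hasDerivAt_pow 2 y).div_const 3).const_sub 1).sub
    ((hasDerivAt_pow 4 y).div_const 45))).sub
    ((hasDerivAt_id y).mul (hasDerivAt_cos y))).congr_deriv ?_
  simp only [id, Pi.sub_apply, Nat.cast_ofNat]
  ring

lemma mul_cot_le {x : ℝ} (hx : 0 < x) (hxπ : x < π) :
    x * cot x ≤ 1 - x ^ 2 / 3 - x ^ 4 / 45 := by
  have hsin := sin_pos_of_pos_of_lt_pi hx hxπ
  rw [cot_eq_cos_div_sin, ← mul_div_assoc, div_le_iff₀ hsin, mul_comm (_ - _)]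
  linarith [mul_cos_le_sin_mul hx.le hxπ.le]

lemma one_le_sin_sq_mul_of_le_pi_div_two {x : ℝ} (hx : 0 < x) (hxπ : x ≤ π / 2) :
    1 ≤ sin x ^ 2 * (1 / x ^ 2 + 4.39) := by
  have hx_sq : x ^ 2 ≤ 2.468 := by nlinarith [pi_lt_d6]
  have hcubic : 0 ≤ x - x ^ 3 / 6 := by nlinarith
  have hexpand : (x - x ^ 3 / 6) ^ 2 * (1 / x ^ 2 + 4.39) = 1 + x ^ 2 *
      (4.39 - 1 / 3 - (4.39 / 3 - 1 / 36) * x ^ 2 + 4.39 / 36 * (x ^ 2) ^ 2) := by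
    field_simp
    ring
  calc 1 ≤ (x - x ^ 3 / 6) ^ 2 * (1 / x ^ 2 + 4.39) := by
        rw [hexpand, le_add_iff_nonneg_right]
        exact mul_nonneg (sq_nonneg x) (by nlinarith [sq_nonneg x])
    _ ≤ sin x ^ 2 * (1 / x ^ 2 + 4.39) := by
        gcongr
        exact sin_ge_sub_cube hx.le

lemma one_le_sin_sq_mul {x : ℝ} (hx : 0 < x) (hx' : x ≤ 2.652) :
    1 ≤ sin x ^ 2 * (1 / x ^ 2 + 4.39) := by
  rcases le_or_gt x (π / 2) with h | h
  · exact one_le_sin_sq_mul_of_le_pi_div_two hx h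
  have hsin : 0.4699 ≤ sin x := by
    have hmono : sin 0.4895 ≤ sin (π - x) := sin_le_sin_of_le_of_le_pi_div_two
      (by linarith [pi_pos]) (by linarith) (by linarith [pi_gt_d6])
    have hcubic := sin_ge_sub_cube (x := 0.4895) (by norm_num)
    rw [sin_pi_sub] at hmono
    norm_num at hmono hcubic ⊢
    linarith
  have hinv : 0.1421 ≤ 1 / x ^ 2 := by
    rw [le_div_iff₀ (by positivity)]
    nlinarith
  calc (1 : ℝ) ≤ 0.4699 ^ 2 * (0.1421 + 4.39) := by norm_num
    _ ≤ sin x ^ 2 * (1 / x ^ 2 + 4.39) := by gcongr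

end TrigonometricBounds

section PowerSums

open Finset

lemma sum_Icc_sq (n : ℕ) :
    ∑ k ∈ Icc 1 n, (k : ℝ) ^ 2 = (n : ℝ) ^ 3 / 3 + (n : ℝ) ^ 2 / 2 + n / 6 := by
  induction n with
  | zero => simp
  | succ n ih =>
    rw [sum_Icc_succ_top (by lia), ih]
    push_cast
    ring

lemma pow_five_div_five_le_sum_Icc_pow_four (n : ℕ) :
    (n : ℝ) ^ 5 / 5 ≤ ∑ k ∈ Icc 1 n, (k : ℝ) ^ 4 := by
  induction n with
  | zero => simp
  | succ n ih =>
    rw [sum_Icc_succ_top (by lia)]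
    push_cast
    have hn : (0 : ℝ) ≤ n := by positivity
    nlinarith [pow_nonneg hn 2, pow_nonneg hn 3]

lemma one_sub_sum_le_prod_one_sub {ι : Type*} {s : Finset ι} {f : ι → ℝ}
    (h₀ : ∀ i ∈ s, 0 ≤ f i) (h₁ : ∀ i ∈ s, f i ≤ 1) :
    1 - ∑ i ∈ s, f i ≤ ∏ i ∈ s, (1 - f i) := by
  induction s using Finset.cons_induction with
  | empty => simp
  | cons i s hi ih =>
    rw [sum_cons, prod_cons]
    simp only [forall_mem_cons] at h₀ h₁
    nlinarith [mul_le_mul_of_nonneg_left (ih h₀.2 h₁.2) (sub_nonneg.2 h₁.1),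
      mul_nonneg h₀.1 (sum_nonneg h₀.2)]

end PowerSums

section Peak

open Finset Real

variable {n k : ℕ} {θ θ₀ t : ℝ}

lemma mul_div_two_mem_Icc_pi (hk : k ∈ Icc 1 n) (hθ : θ ∈ Set.Icc 0 (2 * π / n)) :
    k * θ / 2 ∈ Set.Icc 0 π := by
  obtain ⟨hk₁, hkn⟩ := mem_Icc.1 hk
  obtain ⟨hθ₀, hθ₁⟩ := hθ
  have hn : (0 : ℝ) < n := by exact_mod_cast hk₁.trans hkn
  have hkn' : (k : ℝ) ≤ n := by exact_mod_cast hkn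
  rw [le_div_iff₀ hn] at hθ₁
  exact ⟨by positivity, by nlinarith⟩

lemma mul_div_two_mem_Ioo_pi (hk : k ∈ Icc 1 n) (hθ : θ ∈ Set.Ioo 0 (2 * π / n)) :
    k * θ / 2 ∈ Set.Ioo 0 π := by
  obtain ⟨hk₁, hkn⟩ := mem_Icc.1 hk
  obtain ⟨hθ₀, hθ₁⟩ := hθ
  have hk₀ : (0 : ℝ) < k := by exact_mod_cast hk₁
  have hkn' : (k : ℝ) ≤ n := by exact_mod_cast hkn
  rw [lt_div_iff₀ (hk₀.trans_le hkn')] at hθ₁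
  exact ⟨by positivity, by nlinarith⟩

lemma sin_mul_div_two_pos (hk : k ∈ Icc 1 n) (hθ : θ ∈ Set.Ioo 0 (2 * π / n)) :
    0 < sin (k * θ / 2) :=
  sin_pos_of_mem_Ioo (mul_div_two_mem_Ioo_pi hk hθ)

lemma sineProd_nonneg (hθ : θ ∈ Set.Icc 0 (2 * π / n)) : 0 ≤ sineProd n θ :=
  prod_nonneg fun _ hk ↦
    mul_nonneg zero_le_two (sin_nonneg_of_mem_Icc (mul_div_two_mem_Icc_pi hk hθ))

lemma sineProd_pos (hθ : θ ∈ Set.Ioo 0 (2 * π / n)) : 0 < sineProd n θ :=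
  prod_pos fun _ hk ↦ mul_pos zero_lt_two (sin_mul_div_two_pos hk hθ)

lemma sineProd_eq_zero (hk : k ∈ Icc 1 n) (h : sin (k * θ / 2) = 0) : sineProd n θ = 0 :=
  prod_eq_zero hk (by rw [h, mul_zero])

lemma logDeriv_sineProd (h : ∀ k ∈ Icc 1 n, sin (k * θ / 2) ≠ 0) :
    logDeriv (sineProd n) θ = ∑ k ∈ Icc 1 n, k / 2 * cot (k * θ / 2) := by
  have hfactor (k : ℕ) :
      HasDerivAt (fun θ : ℝ ↦ 2 * sin (k * θ / 2)) (2 * (cos (k * θ / 2) * (k / 2))) θ := by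
    simpa using ((((hasDerivAt_id θ).const_mul (k : ℝ)).div_const 2).sin).const_mul 2
  have hne (k : ℕ) (hk : k ∈ Icc 1 n) : 2 * sin (k * θ / 2) ≠ 0 := mul_ne_zero two_ne_zero (h k hk)
  refine (logDeriv_prod hne fun k _ ↦ (hfactor k).differentiableAt).trans ?_
  refine sum_congr rfl fun k _ ↦ ?_
  rw [logDeriv_apply, (hfactor k).deriv, mul_div_mul_left _ _ two_ne_zero, cot_eq_cos_div_sin]
  ring

/-- `θ₀` maximises `sineProd n` on its first arch `[0, 2π/n]`. -/
def IsFirstArchMax (n : ℕ) (θ₀ : ℝ) : Prop :=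
  θ₀ ∈ Set.Icc 0 (2 * π / n) ∧ IsMaxOn (sineProd n) (Set.Icc 0 (2 * π / n)) θ₀

lemma exists_isFirstArchMax (n : ℕ) : ∃ θ₀, IsFirstArchMax n θ₀ :=
  isCompact_Icc.exists_isMaxOn (Set.nonempty_Icc.2 (by positivity))
    (continuous_sineProd n).continuousOn

namespace IsFirstArchMax

lemma mem_Ioo (h : IsFirstArchMax n θ₀) (hn : 1 ≤ n) : θ₀ ∈ Set.Ioo 0 (2 * π / n) := by
  have hn₀ : (0 : ℝ) < n := by exact_mod_cast hn
  have hmid : π / n ∈ Set.Ioo 0 (2 * π / n) :=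
    ⟨div_pos pi_pos hn₀, by gcongr; linarith [pi_pos]⟩
  have hpos : 0 < sineProd n θ₀ :=
    (sineProd_pos hmid).trans_le (h.2 (Set.Ioo_subset_Icc_self hmid))
  refine ⟨h.1.1.lt_of_ne ?_, h.1.2.lt_of_ne ?_⟩
  · rintro rfl
    exact hpos.ne' (sineProd_eq_zero (mem_Icc.2 ⟨le_rfl, hn⟩) (by simp))
  · rintro rfl
    refine hpos.ne' (sineProd_eq_zero (mem_Icc.2 ⟨hn, le_rfl⟩) ?_)
    rw [show (n : ℝ) * (2 * π / n) / 2 = π by field_simp, sin_pi]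

lemma pos (h : IsFirstArchMax n θ₀) (hn : 1 ≤ n) : 0 < θ₀ := (h.mem_Ioo hn).1

lemma sineProd_pos (h : IsFirstArchMax n θ₀) (hn : 1 ≤ n) : 0 < sineProd n θ₀ :=
  _root_.sineProd_pos (h.mem_Ioo hn)

lemma sum_mul_cot_eq_zero (h : IsFirstArchMax n θ₀) (hn : 1 ≤ n) :
    ∑ k ∈ Icc 1 n, k * θ₀ / 2 * cot (k * θ₀ / 2) = 0 := by
  have hmem := h.mem_Ioo hn
  have hderiv : deriv (sineProd n) θ₀ = 0 :=
    (h.2.isLocalMax (Icc_mem_nhds hmem.1 hmem.2)).deriv_eq_zero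
  have hlog := logDeriv_sineProd fun k hk ↦ (sin_mul_div_two_pos hk hmem).ne'
  rw [logDeriv_apply, hderiv, zero_div] at hlog
  calc _ = θ₀ * ∑ k ∈ Icc 1 n, k / 2 * cot (k * θ₀ / 2) := by
        rw [mul_sum]
        exact sum_congr rfl fun k _ ↦ by ring
    _ = 0 := by rw [← hlog, mul_zero]

lemma pi_div_le (h : IsFirstArchMax n θ₀) (hn : 1 ≤ n) : π / n ≤ θ₀ := by
  by_contra! hlt
  have hn₀ : (0 : ℝ) < n := by exact_mod_cast hn
  rw [lt_div_iff₀ hn₀] at hlt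
  refine (sum_pos (fun k hk ↦ ?_) ⟨1, mem_Icc.2 ⟨le_rfl, hn⟩⟩).ne' (h.sum_mul_cot_eq_zero hn)
  have hangle := (mul_div_two_mem_Ioo_pi hk (h.mem_Ioo hn)).1
  have hkn : (k : ℝ) ≤ n := by exact_mod_cast (mem_Icc.1 hk).2
  rw [cot_eq_cos_div_sin]
  exact mul_pos hangle (div_pos
    (cos_pos_of_mem_Ioo ⟨by linarith [pi_pos], by nlinarith [h.pos hn]⟩)
    (sin_mul_div_two_pos hk (h.mem_Ioo hn)))

lemma mul_div_two_le (h : IsFirstArchMax n θ₀) (hn : 1 ≤ n) : n * θ₀ / 2 ≤ 2.652 := by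
  have hn₀ : (0 : ℝ) < n := by exact_mod_cast hn
  have hθ₀ := h.pos hn
  set x := n * θ₀ / 2 with hx
  have hsum : (0 : ℝ) ≤ ∑ k ∈ Icc 1 n, (1 - (k * θ₀ / 2) ^ 2 / 3 - (k * θ₀ / 2) ^ 4 / 45) := by
    rw [← h.sum_mul_cot_eq_zero hn]
    refine sum_le_sum fun k hk ↦ ?_
    have hangle := mul_div_two_mem_Ioo_pi hk (h.mem_Ioo hn)
    exact mul_cot_le hangle.1 hangle.2
  have hsplit : ∑ k ∈ Icc 1 n, (1 - (k * θ₀ / 2) ^ 2 / 3 - (k * θ₀ / 2) ^ 4 / 45) =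
      n - θ₀ ^ 2 / 12 * ∑ k ∈ Icc 1 n, (k : ℝ) ^ 2
        - θ₀ ^ 4 / 720 * ∑ k ∈ Icc 1 n, (k : ℝ) ^ 4 := by
    have hcard : (n : ℝ) = ∑ k ∈ Icc 1 n, 1 := by simp
    rw [mul_sum, mul_sum, hcard, ← sum_sub_distrib, ← sum_sub_distrib]
    exact sum_congr rfl fun k _ ↦ by ring
  have hsq : n * (x ^ 2 / 9) ≤ θ₀ ^ 2 / 12 * ∑ k ∈ Icc 1 n, (k : ℝ) ^ 2 := by
    rw [sum_Icc_sq, show n * (x ^ 2 / 9) = θ₀ ^ 2 / 12 * ((n : ℝ) ^ 3 / 3) by rw [hx]; ring]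
    gcongr
    linarith [show 0 ≤ (n : ℝ) ^ 2 / 2 by positivity]
  have hfour : n * (x ^ 4 / 225) ≤ θ₀ ^ 4 / 720 * ∑ k ∈ Icc 1 n, (k : ℝ) ^ 4 := by
    rw [show n * (x ^ 4 / 225) = θ₀ ^ 4 / 720 * ((n : ℝ) ^ 5 / 5) by rw [hx]; ring]
    gcongr
    exact pow_five_div_five_le_sum_Icc_pow_four n
  have hpoly : 0 ≤ 1 - x ^ 2 / 9 - x ^ 4 / 225 :=
    nonneg_of_mul_nonneg_right (a := (n : ℝ)) (by linarith) hn₀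
  by_contra! hlt
  have hx₂ : (2.652 : ℝ) ^ 2 ≤ x ^ 2 := by gcongr
  have hx₄ : (2.652 : ℝ) ^ 4 ≤ x ^ 4 := by gcongr
  norm_num at hx₂ hx₄
  linarith

end IsFirstArchMax

end Peak

section PeakMass

open Finset Real

variable {n k : ℕ} {θ θ₀ t : ℝ}

lemma sineProd_sub_mul_sineProd_add (h : ∀ k ∈ Icc 1 n, sin (k * θ / 2) ≠ 0) (t : ℝ) :
    sineProd n (θ - t) * sineProd n (θ + t) =
      sineProd n θ ^ 2 * ∏ k ∈ Icc 1 n, (1 - sin (k * t / 2) ^ 2 / sin (k * θ / 2) ^ 2) := by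
  unfold sineProd
  rw [← prod_mul_distrib, ← prod_pow, ← prod_mul_distrib]
  refine prod_congr rfl fun k hk ↦ ?_
  have hsin := h k hk
  rw [show (k : ℝ) * (θ - t) / 2 = k * θ / 2 - k * t / 2 by ring,
    show (k : ℝ) * (θ + t) / 2 = k * θ / 2 + k * t / 2 by ring, sin_sub, sin_add]
  field_simp
  linear_combination sin (k * θ / 2) ^ 2 * sin_sq_add_cos_sq (k * t / 2)
    - sin (k * t / 2) ^ 2 * sin_sq_add_cos_sq (k * θ / 2)

lemma sum_sin_sq_div_sin_sq_le (n : ℕ) (θ t : ℝ) :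
    ∑ k ∈ Icc 1 n, sin (k * t / 2) ^ 2 / sin (k * θ / 2) ^ 2 ≤
      (∑ k ∈ Icc 1 n, (k : ℝ) ^ 2 / (4 * sin (k * θ / 2) ^ 2)) * t ^ 2 := by
  rw [sum_mul]
  refine sum_le_sum fun k _ ↦ ?_
  rw [show (k : ℝ) ^ 2 / (4 * sin (k * θ / 2) ^ 2) * t ^ 2 =
    (k * t / 2) ^ 2 / sin (k * θ / 2) ^ 2 by ring]
  gcongr ?_ / _
  exact sq_le_sq.2 abs_sin_le_abs

lemma sq_sineProd_mul_le {c : ℝ} (h : ∀ k ∈ Icc 1 n, sin (k * θ / 2) ≠ 0)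
    (hc : ∑ k ∈ Icc 1 n, (k : ℝ) ^ 2 / (4 * sin (k * θ / 2) ^ 2) ≤ c) (ht : c * t ^ 2 ≤ 1) :
    sineProd n θ ^ 2 * (1 - c * t ^ 2) ≤ sineProd n (θ - t) * sineProd n (θ + t) := by
  have hnonneg (k : ℕ) : 0 ≤ sin (k * t / 2) ^ 2 / sin (k * θ / 2) ^ 2 := by positivity
  have hsum := (sum_sin_sq_div_sin_sq_le n θ t).trans (mul_le_mul_of_nonneg_right hc (sq_nonneg t))
  rw [sineProd_sub_mul_sineProd_add h]
  gcongr
  refine (sub_le_sub_left hsum 1).trans (one_sub_sum_le_prod_one_sub (fun k _ ↦ hnonneg k) ?_)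
  exact fun k hk ↦ (single_le_sum (fun k _ ↦ hnonneg k) hk).trans (hsum.trans ht)

lemma two_mul_sineProd_mul_le {c : ℝ} (hθ : θ ∈ Set.Ioo 0 (2 * π / n))
    (hc : ∑ k ∈ Icc 1 n, (k : ℝ) ^ 2 / (4 * sin (k * θ / 2) ^ 2) ≤ c) (ht : c * t ^ 2 ≤ 1)
    (hsub : θ - t ∈ Set.Icc 0 (2 * π / n)) (hadd : θ + t ∈ Set.Icc 0 (2 * π / n)) :
    2 * sineProd n θ * (1 - c * t ^ 2) ≤ sineProd n (θ - t) + sineProd n (θ + t) := by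
  have hc₀ : 0 ≤ c := (sum_nonneg fun k _ ↦ by positivity).trans hc
  have hmul := sq_sineProd_mul_le (fun k hk ↦ (sin_mul_div_two_pos hk hθ).ne') hc ht
  have hsq : (1 - c * t ^ 2) ^ 2 ≤ 1 - c * t ^ 2 := by nlinarith [mul_nonneg hc₀ (sq_nonneg t)]
  refine le_of_sq_le_sq ?_ (add_nonneg (sineProd_nonneg hsub) (sineProd_nonneg hadd))
  nlinarith [sq_nonneg (sineProd n (θ - t) - sineProd n (θ + t)),
    mul_le_mul_of_nonneg_left hsq (sq_nonneg (sineProd n θ))]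

lemma integral_sub_to_add {f : ℝ → ℝ} (hf : Continuous f) (x t : ℝ) :
    ∫ y in (x - t)..(x + t), f y = ∫ s in 0..t, (f (x - s) + f (x + s)) := by
  have hsub : Continuous fun s ↦ f (x - s) := by fun_prop
  have hadd : Continuous fun s ↦ f (x + s) := by fun_prop
  rw [intervalIntegral.integral_add (hsub.intervalIntegrable _ _) (hadd.intervalIntegrable _ _),
    intervalIntegral.integral_comp_sub_left f, intervalIntegral.integral_comp_add_left f,
    sub_zero, add_zero, intervalIntegral.integral_add_adjacent_intervals
      (hf.intervalIntegrable _ _) (hf.intervalIntegrable _ _)]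

lemma mul_integral_le_integral_mul {g : ℝ → ℝ} {u v γ : ℝ} (hu : 0 ≤ u) (huv : u ≤ v)
    (hv : v ≤ 2 * π / n) (hg : Continuous g) (hgγ : ∀ θ ∈ Set.Icc u v, γ ≤ g θ)
    (hg₀ : ∀ θ ∈ Set.Icc 0 (2 * π / n), 0 ≤ g θ) :
    γ * ∫ θ in u..v, sineProd n θ ≤ ∫ θ in 0..(2 * π / n), sineProd n θ * g θ := by
  calc γ * ∫ θ in u..v, sineProd n θ ≤ ∫ θ in u..v, sineProd n θ * g θ := by
        rw [← intervalIntegral.integral_const_mul]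
        refine intervalIntegral.integral_mono_on huv
          ((by fun_prop : Continuous _).intervalIntegrable _ _)
          ((by fun_prop : Continuous _).intervalIntegrable _ _) fun θ hθ ↦ ?_
        rw [mul_comm]
        exact mul_le_mul_of_nonneg_left (hgγ θ hθ) (sineProd_nonneg ⟨hu.trans hθ.1, hθ.2.trans hv⟩)
    _ ≤ ∫ θ in 0..(2 * π / n), sineProd n θ * g θ := by
        refine intervalIntegral.integral_mono_interval hu huv hv ?_
          ((by fun_prop : Continuous _).intervalIntegrable _ _)
        refine (MeasureTheory.ae_restrict_iff' measurableSet_Ioc).2 (.of_forall fun θ hθ ↦ ?_)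
        exact mul_nonneg (sineProd_nonneg (Set.Ioc_subset_Icc_self hθ))
          (hg₀ θ (Set.Ioc_subset_Icc_self hθ))

namespace IsFirstArchMax

lemma sum_sq_div_sin_sq_le (h : IsFirstArchMax n θ₀) (hn : 600 ≤ n) :
    ∑ k ∈ Icc 1 n, (k : ℝ) ^ 2 / (4 * sin (k * θ₀ / 2) ^ 2) ≤ 0.47 * (n : ℝ) ^ 3 := by
  have hn₀ : (600 : ℝ) ≤ n := by exact_mod_cast hn
  have hθ₀ := h.pos (by lia)
  have hterm (k : ℕ) (hk : k ∈ Icc 1 n) :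
      (k : ℝ) ^ 2 / (4 * sin (k * θ₀ / 2) ^ 2) ≤ 1 / θ₀ ^ 2 + 1.0975 * (k : ℝ) ^ 2 := by
    have hsin := sin_mul_div_two_pos hk (h.mem_Ioo (by lia))
    obtain ⟨hk₁, hkn⟩ := mem_Icc.1 hk
    have : (0 : ℝ) < k := by exact_mod_cast hk₁
    have hangle : k * θ₀ / 2 ≤ 2.652 :=
      le_trans (by gcongr) (h.mul_div_two_le (by lia))
    rw [div_le_iff₀ (by positivity)]
    have hexpand : (1 / θ₀ ^ 2 + 1.0975 * (k : ℝ) ^ 2) * (4 * sin (k * θ₀ / 2) ^ 2) =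
        (k : ℝ) ^ 2 * (sin (k * θ₀ / 2) ^ 2 * (1 / (k * θ₀ / 2) ^ 2 + 4.39)) := by
      field_simp
      ring
    rw [hexpand]
    exact le_mul_of_one_le_right (by positivity) (one_le_sin_sq_mul (by positivity) hangle)
  have hinv : 1 / θ₀ ^ 2 ≤ (n : ℝ) ^ 2 * 0.10133 := by
    have hpi := h.pi_div_le (by lia)
    rw [div_le_iff₀ (by linarith)] at hpi
    have hsq : (3.141592 : ℝ) ^ 2 ≤ (θ₀ * n) ^ 2 := by
      gcongr
      linarith [pi_gt_d6]
    rw [div_le_iff₀ (by positivity)]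
    nlinarith
  calc _ ≤ ∑ k ∈ Icc 1 n, (1 / θ₀ ^ 2 + 1.0975 * (k : ℝ) ^ 2) := sum_le_sum hterm
    _ = n * (1 / θ₀ ^ 2) + 1.0975 * ((n : ℝ) ^ 3 / 3 + (n : ℝ) ^ 2 / 2 + n / 6) := by
      rw [sum_add_distrib, ← mul_sum, sum_Icc_sq, sum_const, Nat.card_Icc, nsmul_eq_mul,
        Nat.add_sub_cancel]
    _ ≤ n * ((n : ℝ) ^ 2 * 0.10133)
        + 1.0975 * ((n : ℝ) ^ 3 / 3 + (n : ℝ) ^ 2 / 2 + n / 6) := by gcongr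
    _ ≤ 0.47 * (n : ℝ) ^ 3 := by
      nlinarith [mul_le_mul_of_nonneg_left hn₀ (sq_nonneg (n : ℝ))]

lemma Icc_subset_arch (h : IsFirstArchMax n θ₀) (hn : 1 ≤ n) :
    Set.Icc (θ₀ - 0.06 / n) (θ₀ + 0.06 / n) ⊆ Set.Icc 0 (2 * π / n) := by
  have hn₀ : (0 : ℝ) < n := by exact_mod_cast hn
  have hleft : 0.06 / n ≤ π / n := by
    gcongr
    linarith [pi_gt_d6]
  have hright : θ₀ ≤ 5.304 / n := by
    rw [le_div_iff₀ hn₀]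
    linarith [h.mul_div_two_le hn]
  have hright' : 5.304 / n + 0.06 / n ≤ 2 * π / n := by
    rw [← add_div]
    gcongr
    linarith [pi_gt_d6]
  exact Set.Icc_subset_Icc (by linarith [h.pi_div_le hn]) (by linarith)

lemma sub_mem_and_add_mem_arch (h : IsFirstArchMax n θ₀) (hn : 1 ≤ n) (ht : 0 ≤ t)
    (ht' : t ≤ 0.06 / n) :
    θ₀ - t ∈ Set.Icc 0 (2 * π / n) ∧ θ₀ + t ∈ Set.Icc 0 (2 * π / n) :=
  ⟨h.Icc_subset_arch hn ⟨by linarith, by linarith⟩, h.Icc_subset_arch hn ⟨by linarith, by linarith⟩⟩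

lemma le_integral_sub_to_add (h : IsFirstArchMax n θ₀) (hn : 600 ≤ n) (ht : 0 ≤ t)
    (ht' : t ≤ 0.06 / n) (htn : 0.47 * (n : ℝ) ^ 3 * t ^ 2 ≤ 1) :
    2 * sineProd n θ₀ * (t * (1 - 0.47 * (n : ℝ) ^ 3 * t ^ 2 / 3)) ≤
      ∫ θ in (θ₀ - t)..(θ₀ + t), sineProd n θ := by
  have hF := continuous_sineProd n
  rw [integral_sub_to_add hF]
  calc 2 * sineProd n θ₀ * (t * (1 - 0.47 * (n : ℝ) ^ 3 * t ^ 2 / 3))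
      = ∫ s in 0..t, 2 * sineProd n θ₀ * (1 - 0.47 * (n : ℝ) ^ 3 * s ^ 2) := by
        rw [intervalIntegral.integral_const_mul, intervalIntegral.integral_sub (by simp)
          ((by fun_prop : Continuous _).intervalIntegrable _ _),
          intervalIntegral.integral_const_mul, integral_pow, intervalIntegral.integral_const]
        simp only [smul_eq_mul]
        ring
    _ ≤ ∫ s in 0..t, (sineProd n (θ₀ - s) + sineProd n (θ₀ + s)) := by
        refine intervalIntegral.integral_mono_on ht
          ((by fun_prop : Continuous _).intervalIntegrable _ _)
          ((by fun_prop : Continuous _).intervalIntegrable _ _) fun s hs ↦ ?_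
        obtain ⟨hsub, hadd⟩ := h.sub_mem_and_add_mem_arch (by lia) hs.1 (hs.2.trans ht')
        refine two_mul_sineProd_mul_le (h.mem_Ioo (by lia)) (h.sum_sq_div_sin_sq_le hn) ?_
          hsub hadd
        refine le_trans ?_ htn
        gcongr
        exacts [hs.1, hs.2]

lemma le_integral_mul (h : IsFirstArchMax n θ₀) (hn : 600 ≤ n) {g : ℝ → ℝ} (hg : Continuous g)
    {γ : ℝ} (hγ : 0 ≤ γ) (hg₀ : ∀ θ ∈ Set.Icc 0 (2 * π / n), 0 ≤ g θ)
    (hgγ : ∀ θ ∈ Set.Icc (θ₀ - 0.06 / n) (θ₀ + 0.06 / n), γ ≤ g θ) :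
    γ * (1.94 * sineProd n θ₀ / (n * √n)) ≤
      ∫ θ in 0..(2 * π / n), sineProd n θ * g θ := by
  have hn₀ : (600 : ℝ) ≤ n := by exact_mod_cast hn
  have hsqrt : (24.4 : ℝ) ≤ √n := le_sqrt_of_sq_le (by norm_num; linarith)
  have hF₀ := h.sineProd_pos (by lia)
  -- `1.45` is close to the maximiser of `s * (1 - 0.47 * s ^ 2 / 3)`.
  set t := 1.45 / (n * √n) with ht
  have ht₀ : 0 ≤ t := by positivity
  have ht' : t ≤ 0.06 / n := by
    rw [ht, div_le_div_iff₀ (by positivity) (by linarith)]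
    nlinarith
  have htn : (n : ℝ) ^ 3 * t ^ 2 = 2.1025 := by
    rw [ht, div_pow, mul_pow, sq_sqrt (by linarith)]
    field_simp
    norm_num
  obtain ⟨hsub, hadd⟩ := h.sub_mem_and_add_mem_arch (by lia) ht₀ ht'
  calc γ * (1.94 * sineProd n θ₀ / (n * √n))
      ≤ γ * (2 * sineProd n θ₀ * (t * (1 - 0.47 * ((n : ℝ) ^ 3 * t ^ 2) / 3))) := by
        rw [htn, ht, show 2 * sineProd n θ₀ * (1.45 / (n * √n) * (1 - 0.47 * 2.1025 / 3)) =
          2 * 1.45 * (1 - 0.47 * 2.1025 / 3) * sineProd n θ₀ / (n * √n) by ring]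
        gcongr
        norm_num
    _ ≤ γ * ∫ θ in (θ₀ - t)..(θ₀ + t), sineProd n θ := by
        gcongr
        rw [← mul_assoc 0.47]
        exact h.le_integral_sub_to_add hn ht₀ ht' (by linarith)
    _ ≤ ∫ θ in 0..(2 * π / n), sineProd n θ * g θ :=
        mul_integral_le_integral_mul hsub.1 (by linarith) hadd.2 hg
          (fun θ hθ ↦ hgγ θ ⟨by linarith [hθ.1], by linarith [hθ.2]⟩) hg₀

end IsFirstArchMax

end PeakMass

section PeakHeight

open Finset Real
open scoped Nat

variable {n r s m : ℕ} {θ x : ℝ}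

lemma cos_le_quartic (hx : 0 ≤ x) : cos x ≤ 1 - x ^ 2 / 2 + x ^ 4 / 24 := by
  rw [← sub_nonneg]
  refine nonneg_of_hasDerivAt_nonneg (f := fun x ↦ 1 - x ^ 2 / 2 + x ^ 4 / 24 - cos x)
    (f' := fun x ↦ sin x - (x - x ^ 3 / 6)) (fun y ↦ ?_) (by simp)
    (fun y hy _ ↦ sub_nonneg.2 (sin_ge_sub_cube hy.le)) hx le_rfl
  refine (((((hasDerivAt_pow 2 y).div_const 2).const_sub 1).add
    ((hasDerivAt_pow 4 y).div_const 24)).sub (hasDerivAt_cos y)).congr_deriv ?_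
  simp only [Nat.cast_ofNat]
  ring

lemma sin_le_quintic (hx : 0 ≤ x) : sin x ≤ x - x ^ 3 / 6 + x ^ 5 / 120 := by
  rw [← sub_nonneg]
  refine nonneg_of_hasDerivAt_nonneg (f := fun x ↦ x - x ^ 3 / 6 + x ^ 5 / 120 - sin x)
    (f' := fun x ↦ 1 - x ^ 2 / 2 + x ^ 4 / 24 - cos x) (fun y ↦ ?_) (by simp)
    (fun y hy _ ↦ sub_nonneg.2 (cos_le_quartic hy.le)) hx le_rfl
  refine ((((hasDerivAt_id y).sub ((hasDerivAt_pow 3 y).div_const 6)).add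
    ((hasDerivAt_pow 5 y).div_const 120)).sub (hasDerivAt_sin y)).congr_deriv ?_
  simp only [Nat.cast_ofNat]
  ring

lemma sin_le_mul_exp (hx : 0 ≤ x) (hx' : x ≤ 0.63) : sin x ≤ x * exp (-(0.163 * x ^ 2)) := by
  have hsq : x ^ 2 ≤ 0.3969 := by nlinarith
  calc sin x ≤ x - x ^ 3 / 6 + x ^ 5 / 120 := sin_le_quintic hx
    _ ≤ x * (-(0.163 * x ^ 2) + 1) := by nlinarith [pow_nonneg hx 3]
    _ ≤ x * exp (-(0.163 * x ^ 2)) := by gcongr; exact add_one_le_exp _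

lemma sineProd_two_pi_div_succ (m : ℕ) : sineProd m (2 * π / (m + 1 : ℕ)) = (m + 1 : ℕ) := by
  have hroots : ∏ k ∈ Icc 1 m, (1 - Complex.exp (2 * π * Complex.I / (m + 1 : ℕ)) ^ k) =
      ((m + 1 : ℕ) : ℂ) := by
    have h := (Complex.isPrimitiveRoot_exp (m + 1) m.succ_ne_zero).prod_one_sub_pow_eq_order
    rw [range_eq_Ico, prod_Ico_add' (fun k ↦ 1 - _ ^ k)] at h
    exact_mod_cast h
  have hnorm := congrArg norm hroots
  rw [norm_prod, Complex.norm_natCast] at hnorm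
  refine Eq.trans (prod_congr rfl fun k hk ↦ ?_) hnorm
  have hsin : 0 ≤ sin (k * (2 * π / (m + 1 : ℕ)) / 2) :=
    sin_nonneg_of_mem_Icc (mul_div_two_mem_Icc_pi
      (Icc_subset_Icc_right m.le_succ hk) ⟨by positivity, le_rfl⟩)
  have hexp : Complex.exp (2 * π * Complex.I / (m + 1 : ℕ)) ^ k =
      Complex.exp (Complex.I * ((k * (2 * π / (m + 1 : ℕ)) : ℝ) : ℂ)) := by
    rw [← Complex.exp_nat_mul]
    congr 1
    push_cast
    ring
  rw [hexp, norm_sub_rev, Complex.norm_exp_I_mul_ofReal_sub_one, norm_of_nonneg (by positivity)]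

lemma sineProd_mul_sineProd_two_pi_div (n r : ℕ) :
    sineProd n (2 * π / (n + r + 1 : ℕ)) * sineProd r (2 * π / (n + r + 1 : ℕ)) =
      (n + r + 1 : ℕ) := by
  set g : ℕ → ℝ := fun k ↦ 2 * sin (k * (2 * π / (n + r + 1 : ℕ)) / 2) with hg
  have hreflect : ∀ k ∈ Ico 1 (r + 1), g (n + r + 1 - k) = g k := fun k hk ↦ by
    rw [mem_Ico] at hk
    simp only [hg]
    rw [← sin_pi_sub, Nat.cast_sub (by lia)]
    congr 2
    field
  calc sineProd n (2 * π / (n + r + 1 : ℕ)) * sineProd r (2 * π / (n + r + 1 : ℕ))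
      = (∏ k ∈ Ico 1 (n + 1), g k) * ∏ k ∈ Ico 1 (r + 1), g k := rfl
    _ = (∏ k ∈ Ico 1 (n + 1), g k) * ∏ k ∈ Ico (n + 1) (n + r + 1), g k := by
      rw [← prod_congr rfl hreflect, prod_Ico_reflect g 1 (by lia)]
      congr 3; lia
    _ = sineProd (n + r) (2 * π / (n + r + 1 : ℕ)) := prod_Ico_consecutive g (by lia) (by lia)
    _ = (n + r + 1 : ℕ) := sineProd_two_pi_div_succ (n + r)

lemma sineProd_le_pow_mul_factorial_mul_exp (hθ : 0 ≤ θ) (hs : s * θ / 2 ≤ 0.63) :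
    sineProd s θ ≤ θ ^ s * s ! * exp (-(0.163 * (θ / 2) ^ 2 * ∑ k ∈ Icc 1 s, (k : ℝ) ^ 2)) := by
  have hle : ∀ k ∈ Icc 1 s, k * θ / 2 ≤ 0.63 := fun k hk ↦ by
    have : (k : ℝ) ≤ s := by exact_mod_cast (mem_Icc.1 hk).2
    exact le_trans (by gcongr) hs
  have hfactorial : ∏ k ∈ Icc 1 s, (k : ℝ) = s ! := by
    rw [← Ico_add_one_right_eq_Icc, ← Nat.cast_prod, prod_Ico_id_eq_factorial]
  calc sineProd s θ
      ≤ ∏ k ∈ Icc 1 s, (θ * k * exp (-(0.163 * (θ / 2) ^ 2 * (k : ℝ) ^ 2))) := by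
        refine prod_le_prod (fun k hk ↦ ?_) fun k hk ↦ ?_
        · have := sin_nonneg_of_nonneg_of_le_pi (x := k * θ / 2) (by positivity)
            (by linarith [hle k hk, pi_gt_three])
          positivity
        · calc 2 * sin (k * θ / 2)
              ≤ 2 * (k * θ / 2 * exp (-(0.163 * (k * θ / 2) ^ 2))) := by
                gcongr; exact sin_le_mul_exp (by positivity) (hle k hk)
            _ = θ * k * exp (-(0.163 * (θ / 2) ^ 2 * (k : ℝ) ^ 2)) := by ring_nf
    _ = _ := by
        rw [prod_mul_distrib, prod_mul_distrib, ← exp_sum, prod_const, hfactorial, Nat.card_Icc,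
          sum_neg_distrib, ← mul_sum, Nat.add_sub_cancel]

lemma factorial_le_exp_one_mul_sqrt_mul_pow (hs : 1 ≤ s) :
    (s ! : ℝ) ≤ exp 1 * √s * (s / exp 1) ^ s := by
  have h := Stirling.stirlingSeq'_antitone (Nat.zero_le (s - 1))
  simp only [Function.comp, Nat.succ_eq_add_one, zero_add, Stirling.stirlingSeq_one] at h
  rw [Nat.sub_add_cancel hs, Stirling.stirlingSeq, div_le_iff₀ (by positivity)] at h
  refine h.trans_eq ?_
  rw [sqrt_mul zero_le_two]
  field

lemma two_mul_pi_div_five_le_exp : 2 * π / 5 ≤ exp 0.229 := by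
  have h := sum_le_exp_of_nonneg (x := 0.229) (by norm_num) 4
  norm_num [sum_range_succ, Nat.factorial] at h
  linarith [pi_lt_d6]

lemma pow_mul_factorial_le (hs : 1 ≤ s) (hm : 5 * s + 1 ≤ m) :
    (2 * π / m) ^ s * s ! ≤ exp 1 * √s * exp (-(0.771 * s)) := by
  have hm' : 5 * (s : ℝ) + 1 ≤ m := by exact_mod_cast hm
  have hm₀ : (0 : ℝ) < m := by linarith [s.cast_nonneg (α := ℝ)]
  have hbase : 2 * π / m * (s / exp 1) ≤ exp (-0.771) := by
    calc 2 * π / m * (s / exp 1) = 2 * π * (s / m) * exp (-1) := by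
          rw [exp_neg]; field
      _ ≤ 2 * π * (1 / 5) * exp (-1) := by
          gcongr 2 * π * ?_ * exp (-1)
          rw [div_le_div_iff₀ hm₀ (by norm_num)]
          linarith
      _ ≤ exp 0.229 * exp (-1) := by
          gcongr
          linarith [two_mul_pi_div_five_le_exp]
      _ = exp (-0.771) := by rw [← exp_add]; norm_num
  calc (2 * π / m) ^ s * s ! ≤ (2 * π / m) ^ s * (exp 1 * √s * (s / exp 1) ^ s) := by
        gcongr; exact factorial_le_exp_one_mul_sqrt_mul_pow hs
    _ = exp 1 * √s * (2 * π / m * (s / exp 1)) ^ s := by rw [mul_pow]; ring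
    _ ≤ exp 1 * √s * exp (-0.771) ^ s := by gcongr
    _ = exp 1 * √s * exp (-(0.771 * s)) := by rw [← exp_nat_mul]; ring_nf

lemma le_mul_sum_sq (hs : 150 ≤ s) (hm : 5 * s + 1 ≤ m) (hm' : m ≤ 5 * s + 3) :
    0.0212 * s ≤ 0.163 * (2 * π / m / 2) ^ 2 * ∑ k ∈ Icc 1 s, (k : ℝ) ^ 2 := by
  have hs₀ : (150 : ℝ) ≤ s := by exact_mod_cast hs
  have hm₀ : (0 : ℝ) < m := by exact_mod_cast (by lia : 0 < m)
  have hm₁ : (m : ℝ) ≤ 5 * s + 3 := by exact_mod_cast hm'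
  have hratio : 0.1992 ≤ s / (m : ℝ) := by rw [le_div_iff₀ hm₀]; linarith
  have hπ : 3.141592 ≤ π := pi_gt_d6.le
  calc 0.0212 * (s : ℝ) ≤ 0.163 * (3.141592 ^ 2 * 0.1992 ^ 2) * (s / 3) := by linarith
    _ ≤ 0.163 * (π ^ 2 * (s / m) ^ 2) * (s / 3) := by gcongr
    _ = 0.163 * (2 * π / m / 2) ^ 2 * ((s : ℝ) ^ 3 / 3) := by field
    _ ≤ 0.163 * (2 * π / m / 2) ^ 2 * ∑ k ∈ Icc 1 s, (k : ℝ) ^ 2 := by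
        rw [sum_Icc_sq]
        gcongr
        have : 0 ≤ (s : ℝ) ^ 2 / 2 + s / 6 := by positivity
        linarith

lemma sineProd_two_pi_div_le (hs : 150 ≤ s) (hm : 5 * s + 1 ≤ m) (hm' : m ≤ 5 * s + 3) :
    sineProd s (2 * π / m) ≤ exp 1 * √s * exp (-(0.7918 * s)) := by
  have hm₀ : (0 : ℝ) < m := by exact_mod_cast (by lia : 0 < m)
  have hm₁ : 5 * (s : ℝ) + 1 ≤ m := by exact_mod_cast hm
  have hangle : s * (2 * π / m) / 2 ≤ 0.63 := by
    rw [show s * (2 * π / m) / 2 = s * π / m by field, div_le_iff₀ hm₀]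
    nlinarith [pi_lt_d6]
  calc sineProd s (2 * π / m) ≤ (2 * π / m) ^ s * s ! * exp (-(0.163 * (2 * π / m / 2) ^ 2 *
          ∑ k ∈ Icc 1 s, (k : ℝ) ^ 2)) :=
        sineProd_le_pow_mul_factorial_mul_exp (by positivity) hangle
    _ ≤ exp 1 * √s * exp (-(0.771 * s)) * exp (-(0.0212 * s)) := by
        refine mul_le_mul (pow_mul_factorial_le (by lia) hm) ?_ (exp_pos _).le (by positivity)
        exact exp_le_exp.2 (neg_le_neg (le_mul_sum_sq hs hm hm'))
    _ = exp 1 * √s * exp (-(0.7922 * s)) := by rw [mul_assoc, ← exp_add]; ring_nf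
    _ ≤ exp 1 * √s * exp (-(0.7918 * s)) := by gcongr; norm_num

lemma le_sineProd_two_pi_div (hn : 600 ≤ n) (hn' : Even n) :
    1.839 * √(n / 4 : ℕ) * exp (0.7918 * (n / 4 : ℕ)) ≤
      sineProd n (2 * π / (n + n / 4 + 1 : ℕ)) := by
  obtain ⟨j, hj⟩ := hn'
  set s := n / 4
  have hs₀ : (0 : ℝ) < s := by exact_mod_cast (by lia : 0 < s)
  have hm : 5 * (s : ℝ) ≤ (n + s + 1 : ℕ) := by exact_mod_cast (by lia : 5 * s ≤ n + s + 1)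
  have hpos : 0 < sineProd n (2 * π / (n + s + 1 : ℕ)) := by
    have : (0 : ℝ) < n := by exact_mod_cast (by lia : 0 < n)
    refine sineProd_pos ⟨by positivity, ?_⟩
    gcongr
    lia
  have hsqrt : √(s : ℝ) * √(s : ℝ) = s := mul_self_sqrt hs₀.le
  have hprod : 5 * (√(s : ℝ) * √(s : ℝ)) ≤ sineProd n (2 * π / (n + s + 1 : ℕ)) *
      (2.7182818286 * √s * exp (-(0.7918 * s))) :=
    calc 5 * (√(s : ℝ) * √(s : ℝ)) ≤ (n + s + 1 : ℕ) := by rwa [hsqrt]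
      _ = sineProd n (2 * π / (n + s + 1 : ℕ)) * sineProd s (2 * π / (n + s + 1 : ℕ)) :=
        (sineProd_mul_sineProd_two_pi_div n s).symm
      _ ≤ sineProd n (2 * π / (n + s + 1 : ℕ)) * (exp 1 * √s * exp (-(0.7918 * s))) := by
        gcongr
        exact sineProd_two_pi_div_le (by lia) (by lia) (by lia)
      _ ≤ _ := by gcongr; exact exp_one_lt_d9.le
  have hcancel : 5 * √(s : ℝ) * exp (0.7918 * s) ≤
      2.7182818286 * sineProd n (2 * π / (n + s + 1 : ℕ)) := by
    rw [exp_neg, ← div_eq_mul_inv, mul_div_assoc', le_div_iff₀ (exp_pos _)] at hprod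
    refine le_of_mul_le_mul_right ?_ (sqrt_pos.2 hs₀)
    linarith
  have : 0 < √(s : ℝ) * exp (0.7918 * s) := by positivity
  linarith

end PeakHeight

section LogMajorant

open Finset Real

variable {s x : ℝ}

lemma hasDerivAt_taylor_sub_log (hx : 0 < x) :
    HasDerivAt (fun x ↦ (x - 1) - (x - 1) ^ 2 / 2 + (x - 1) ^ 3 / 3 - (x - 1) ^ 4 / 4 +
      (x - 1) ^ 5 / 5 - log x) ((x - 1) ^ 5 / x) x := by
  have h : HasDerivAt (fun x : ℝ ↦ x - 1) 1 x := (hasDerivAt_id x).sub_const 1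
  refine (((((h.sub ((h.pow 2).div_const 2)).add ((h.pow 3).div_const 3)).sub
    ((h.pow 4).div_const 4)).add ((h.pow 5).div_const 5)).sub
    (hasDerivAt_log hx.ne')).congr_deriv ?_
  push_cast
  field

lemma log_le_taylor (hx : 0 < x) :
    log x ≤ (x - 1) - (x - 1) ^ 2 / 2 + (x - 1) ^ 3 / 3 - (x - 1) ^ 4 / 4 + (x - 1) ^ 5 / 5 := by
  set f : ℝ → ℝ := fun x ↦ (x - 1) - (x - 1) ^ 2 / 2 + (x - 1) ^ 3 / 3 - (x - 1) ^ 4 / 4 +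
    (x - 1) ^ 5 / 5 - log x with hf
  have hderiv : ∀ y, 0 < y → HasDerivAt f ((y - 1) ^ 5 / y) y := fun y hy ↦
    hasDerivAt_taylor_sub_log hy
  have hf₁ : f 1 = 0 := by simp [hf]
  rw [← sub_nonneg, ← hf₁]
  change f 1 ≤ f x
  rcases le_total x 1 with h | h
  · refine antitoneOn_of_hasDerivWithinAt_nonpos (convex_Icc x 1)
      (fun y hy ↦ (hderiv y (hx.trans_le hy.1)).continuousAt.continuousWithinAt)
      (fun y hy ↦ (hderiv y (hx.trans_le (interior_subset hy).1)).hasDerivWithinAt)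
      (fun y hy ↦ ?_) ⟨le_rfl, h⟩ ⟨h, le_rfl⟩ h
    have hy' := interior_subset hy
    exact div_nonpos_of_nonpos_of_nonneg
      ((Odd.pow_nonpos_iff (by decide)).2 (sub_nonpos.2 hy'.2)) (hx.trans_le hy'.1).le
  · refine monotoneOn_of_hasDerivWithinAt_nonneg (convex_Icc 1 x)
      (fun y hy ↦ (hderiv y (one_pos.trans_le hy.1)).continuousAt.continuousWithinAt)
      (fun y hy ↦ (hderiv y (one_pos.trans_le (interior_subset hy).1)).hasDerivWithinAt)
      (fun y hy ↦ ?_) ⟨le_rfl, h⟩ ⟨h, le_rfl⟩ h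
    have hy' := interior_subset hy
    exact div_nonneg (pow_nonneg (sub_nonneg.2 hy'.1) 5) (one_pos.trans_le hy'.1).le

lemma log_four_mul_le_of_eq_mul_zpow {k : ℝ} {e : ℤ} (hs : 0 < s) (hk₀ : 0 < k)
    (hk : 4 = k * 2 ^ e) :
    log (4 * s) ≤ e * log 2 + ((k * s - 1) - (k * s - 1) ^ 2 / 2 + (k * s - 1) ^ 3 / 3 -
      (k * s - 1) ^ 4 / 4 + (k * s - 1) ^ 5 / 5) := by
  have hlog : log (4 * s) = e * log 2 + log (k * s) := by
    rw [hk, show k * 2 ^ e * s = 2 ^ e * (k * s) by ring, log_mul (by positivity) (by positivity),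
      log_zpow]
  linarith [log_le_taylor (mul_pos hk₀ hs)]

/-- A polynomial majorant of `log (4 * s) / 2` on `(0, 1]`. With `s = sin (x / 2) ^ 2` it becomes
the cosine polynomial in `x` of degree 8 with mean `0.08` that majorizes
`log |2 * sin (x / 2)|`. -/
noncomputable def logMajorant (s : ℝ) : ℝ :=
  -16877 / 10000 + 66257 / 2500 * s - 262369 / 1250 * s ^ 2 + 121702 / 125 * s ^ 3 -
    1659856 / 625 * s ^ 4 + 2713568 / 625 * s ^ 5 - 2613632 / 625 * s ^ 6 +
    1366528 / 625 * s ^ 7 - 299008 / 625 * s ^ 8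

/- On each subinterval, `logMajorant s` exceeds the Taylor bound for `log (4 * s) / 2` by a
polynomial whose coefficients in the Bernstein basis are all nonnegative. -/
lemma log_four_mul_div_two_le_of_le (hs : 0 < s) (hs' : s ≤ 1 / 8) :
    log (4 * s) / 2 ≤ logMajorant s := by
  rcases le_total s (7 / 200) with h | h
  · have : 0 ≤ 7 / 200 - s := by linarith
    have : 0 ≤
        3791518592000000000 / 17294403 * (7 / 200 - s) ^ 8 +
        15952101376000000000 / 17294403 * s * (7 / 200 - s) ^ 7 +
        3944567859200000000 / 2470629 * s ^ 2 * (7 / 200 - s) ^ 6 +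
        3620039459840000000 / 2470629 * s ^ 3 * (7 / 200 - s) ^ 5 +
        1851612616130560000 / 2470629 * s ^ 4 * (7 / 200 - s) ^ 4 +
        475951033793331200 / 2470629 * s ^ 5 * (7 / 200 - s) ^ 3 +
        13425146984177664 / 823543 * s ^ 6 * (7 / 200 - s) ^ 2 +
        432890764249772032 / 144120025 * s ^ 7 * (7 / 200 - s) +
        6098272684953403392 / 3603000625 * s ^ 8 := by
      positivity
    have hlog := log_four_mul_le_of_eq_mul_zpow (k := 32) (e := -3) hs
      (by norm_num) (by norm_num)
    push_cast at hlog
    rw [logMajorant]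
    linarith [log_two_gt_d9, log_two_lt_d9]
  · have : 0 ≤ s - 7 / 200 := by linarith
    have : 0 ≤ 1 / 8 - s := by linarith
    have : 0 ≤
        53138518526797696 / 80712601875 * (1 / 8 - s) ^ 8 +
        15738205855727008 / 645700815 * (s - 7 / 200) * (1 / 8 - s) ^ 7 +
        32746364590229152 / 129140163 * (s - 7 / 200) ^ 2 * (1 / 8 - s) ^ 6 +
        97407704637053600 / 129140163 * (s - 7 / 200) ^ 3 * (1 / 8 - s) ^ 5 +
        140685361364020000 / 129140163 * (s - 7 / 200) ^ 4 * (1 / 8 - s) ^ 4 +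
        120233565945500000 / 129140163 * (s - 7 / 200) ^ 5 * (1 / 8 - s) ^ 3 +
        63131573387500000 / 129140163 * (s - 7 / 200) ^ 6 * (1 / 8 - s) ^ 2 +
        16393188687500000 / 129140163 * (s - 7 / 200) ^ 7 * (1 / 8 - s) +
        533717687500000 / 129140163 * (s - 7 / 200) ^ 8 := by
      positivity
    have hlog := log_four_mul_le_of_eq_mul_zpow (k := 16) (e := -2) (by linarith : 0 < s)
      (by norm_num) (by norm_num)
    push_cast at hlog
    rw [logMajorant]
    linarith [log_two_gt_d9, log_two_lt_d9]

lemma log_four_mul_div_two_le_of_mem_Icc (hs : s ∈ Set.Icc (1 / 8) (13 / 20)) :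
    log (4 * s) / 2 ≤ logMajorant s := by
  obtain ⟨hs₁, hs₂⟩ := hs
  rcases le_total s (31 / 100) with h | h
  · have : 0 ≤ s - 1 / 8 := by linarith
    have : 0 ≤ 31 / 100 - s := by linarith
    have : 0 ≤
        465262000000000000 / 10537438361763 * (31 / 100 - s) ^ 8 +
        3203268680000000000 / 10537438361763 * (s - 1 / 8) * (31 / 100 - s) ^ 7 +
        6784747859200000000 / 10537438361763 * (s - 1 / 8) ^ 2 * (31 / 100 - s) ^ 6 +
        6106310507008000000 / 10537438361763 * (s - 1 / 8) ^ 3 * (31 / 100 - s) ^ 5 +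
        2143926782136320000 / 10537438361763 * (s - 1 / 8) ^ 4 * (31 / 100 - s) ^ 4 +
        90315435743641600 / 10537438361763 * (s - 1 / 8) ^ 5 * (31 / 100 - s) ^ 3 +
        59213856061784064 / 3512479453921 * (s - 1 / 8) ^ 6 * (31 / 100 - s) ^ 2 +
        389136380371664896 / 17562397269605 * (s - 1 / 8) ^ 7 * (31 / 100 - s) +
        11824374179477061632 / 2195299658700625 * (s - 1 / 8) ^ 8 := by
      positivity
    have hlog := log_four_mul_le_of_eq_mul_zpow (k := 4) (e := 0) (by linarith : 0 < s)
      (by norm_num) (by norm_num)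
    push_cast at hlog
    rw [logMajorant]
    linarith [log_two_gt_d9, log_two_lt_d9]
  · have : 0 ≤ s - 31 / 100 := by linarith
    have : 0 ≤ 13 / 20 - s := by linarith
    have : 0 ≤
        514866585608386 / 13079545201875 * (13 / 20 - s) ^ 8 +
        1667032683417304 / 2615909040375 * (s - 31 / 100) * (13 / 20 - s) ^ 7 +
        1881362847234112 / 523181808075 * (s - 31 / 100) ^ 2 * (13 / 20 - s) ^ 6 +
        794533972907192 / 104636361615 * (s - 31 / 100) ^ 3 * (13 / 20 - s) ^ 5 +
        108230435426420 / 20927272323 * (s - 31 / 100) ^ 4 * (13 / 20 - s) ^ 4 +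
        21309407750440 / 20927272323 * (s - 31 / 100) ^ 5 * (13 / 20 - s) ^ 3 +
        208904559600 / 6975757441 * (s - 31 / 100) ^ 6 * (13 / 20 - s) ^ 2 +
        675384399000 / 6975757441 * (s - 31 / 100) ^ 7 * (13 / 20 - s) +
        210430838750 / 6975757441 * (s - 31 / 100) ^ 8 := by
      positivity
    have hlog := log_four_mul_le_of_eq_mul_zpow (k := 2) (e := 1) (by linarith : 0 < s)
      (by norm_num) (by norm_num)
    push_cast at hlog
    rw [logMajorant]
    linarith [log_two_gt_d9, log_two_lt_d9]

lemma log_four_mul_div_two_le_of_ge (hs : 13 / 20 ≤ s) (hs' : s ≤ 1) :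
    log (4 * s) / 2 ≤ logMajorant s := by
  rcases le_total s (37 / 40) with h | h
  · have : 0 ≤ s - 13 / 20 := by linarith
    have : 0 ≤ 37 / 40 - s := by linarith
    have : 0 ≤
        64091293351936 / 401922901875 * (37 / 40 - s) ^ 8 +
        789184514256896 / 401922901875 * (s - 13 / 20) * (37 / 40 - s) ^ 7 +
        4010254130163712 / 401922901875 * (s - 13 / 20) ^ 2 * (37 / 40 - s) ^ 6 +
        9804230389700608 / 401922901875 * (s - 13 / 20) ^ 3 * (37 / 40 - s) ^ 5 +
        2269940795613184 / 80384580375 * (s - 13 / 20) ^ 4 * (37 / 40 - s) ^ 4 +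
        4964525705504512 / 401922901875 * (s - 13 / 20) ^ 5 * (37 / 40 - s) ^ 3 +
        10082025789184 / 133974300625 * (s - 13 / 20) ^ 6 * (37 / 40 - s) ^ 2 +
        51392870334208 / 133974300625 * (s - 13 / 20) ^ 7 * (37 / 40 - s) +
        21846226881792 / 133974300625 * (s - 13 / 20) ^ 8 := by
      positivity
    have hlog := log_four_mul_le_of_eq_mul_zpow (k := 1) (e := 2) (by linarith : 0 < s)
      (by norm_num) (by norm_num)
    push_cast at hlog
    rw [logMajorant]
    linarith [log_two_gt_d9, log_two_lt_d9]
  · have : 0 ≤ s - 37 / 40 := by linarith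
    have : 0 ≤ 1 - s := by linarith
    have : 0 ≤
        7282075627264 / 1366875 * (1 - s) ^ 8 +
        4631512726784 / 91125 * (s - 37 / 40) * (1 - s) ^ 7 +
        462251581184 / 2187 * (s - 37 / 40) ^ 2 * (1 - s) ^ 6 +
        5380056548608 / 10935 * (s - 37 / 40) ^ 3 * (1 - s) ^ 5 +
        167506765312 / 243 * (s - 37 / 40) ^ 4 * (1 - s) ^ 4 +
        1273095700480 / 2187 * (s - 37 / 40) ^ 5 * (1 - s) ^ 3 +
        607728762880 / 2187 * (s - 37 / 40) ^ 6 * (1 - s) ^ 2 +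
        44981288960 / 729 * (s - 37 / 40) ^ 7 * (1 - s) +
        6013583360 / 2187 * (s - 37 / 40) ^ 8 := by
      positivity
    have hlog := log_four_mul_le_of_eq_mul_zpow (k := 1) (e := 2) (by linarith : 0 < s)
      (by norm_num) (by norm_num)
    push_cast at hlog
    rw [logMajorant]
    linarith [log_two_gt_d9, log_two_lt_d9]

lemma log_four_mul_div_two_le (hs : 0 < s) (hs' : s ≤ 1) :
    log (4 * s) / 2 ≤ logMajorant s := by
  rcases le_total s (1 / 8) with h | h
  · exact log_four_mul_div_two_le_of_le hs h
  rcases le_total s (13 / 20) with h' | h'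
  · exact log_four_mul_div_two_le_of_mem_Icc ⟨h, h'⟩
  · exact log_four_mul_div_two_le_of_ge h' hs'

end LogMajorant

section SinePolynomials

open Finset Real

variable {x z u K : ℝ} {c : ℕ → ℝ} {m : ℕ}

/-- The Fourier coefficients of the cosine majorant
`0.08 - ∑ j ∈ Icc 1 8, cosCoeff j * cos (j * x)` of `log |2 * sin (x / 2)|`. Numerically optimized:
they make the bound for `sineProd` away from its peak good enough at `n = 600`. -/
noncomputable def cosCoeff : ℕ → ℝ
  | 1 => 0.858
  | 2 => 0.369
  | 3 => 0.2115
  | 4 => 0.135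
  | 5 => 0.089
  | 6 => 0.0573
  | 7 => 0.0333
  | 8 => 0.0146
  | _ => 0

lemma cosCoeff_nonneg (j : ℕ) : 0 ≤ cosCoeff j := by
  unfold cosCoeff
  split <;> norm_num

lemma sum_cosCoeff_mul (f : ℕ → ℝ) : ∑ j ∈ Icc 1 8, cosCoeff j * f j =
    0.858 * f 1 + 0.369 * f 2 + 0.2115 * f 3 + 0.135 * f 4 + 0.089 * f 5 + 0.0573 * f 6 +
      0.0333 * f 7 + 0.0146 * f 8 := by
  rw [show Icc 1 8 = ({1, 2, 3, 4, 5, 6, 7, 8} : Finset ℕ) from rfl]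
  norm_num [cosCoeff, add_assoc]

lemma sum_cosCoeff_two_mul_mul (f : ℕ → ℝ) : ∑ j ∈ Icc 1 4, cosCoeff (2 * j) * f j =
    0.369 * f 1 + 0.135 * f 2 + 0.0573 * f 3 + 0.0146 * f 4 := by
  rw [show Icc 1 4 = ({1, 2, 3, 4} : Finset ℕ) from rfl]
  norm_num [cosCoeff, add_assoc]

/-- The antiderivative `∑ j ≤ m, c j * sin (j * z) / j` of a cosine polynomial. -/
noncomputable def sinePoly (c : ℕ → ℝ) (m : ℕ) (z : ℝ) : ℝ :=
  ∑ j ∈ Icc 1 m, c j * (sin (j * z) / j)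

lemma sinePoly_neg (c : ℕ → ℝ) (m : ℕ) (z : ℝ) : sinePoly c m (-z) = -sinePoly c m z := by
  simp only [sinePoly, mul_neg, sin_neg, neg_div, sum_neg_distrib]

lemma periodic_sinePoly (c : ℕ → ℝ) (m : ℕ) : Function.Periodic (sinePoly c m) (2 * π) := fun z ↦ by
  simp only [sinePoly, mul_add, sin_add_nat_mul_two_pi]

lemma cos_add_two_mul (j x : ℝ) :
    cos ((j + 2) * x) = 2 * cos x * cos ((j + 1) * x) - cos (j * x) := by
  rw [show (j + 2) * x = (j + 1) * x + x by ring, show j * x = (j + 1) * x - x by ring, cos_add,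
    cos_sub]
  ring

lemma sin_add_two_mul (j x : ℝ) :
    sin ((j + 2) * x) = 2 * cos x * sin ((j + 1) * x) - sin (j * x) := by
  rw [show (j + 2) * x = (j + 1) * x + x by ring, show j * x = (j + 1) * x - x by ring, sin_add,
    sin_sub]
  ring

/-- The quotient `sinePoly cosCoeff 8 z / sin z`, as a polynomial in `x = cos z`. -/
noncomputable def sineQuot (x : ℝ) : ℝ :=
  28019 / 35000 + 2767 / 10000 * x + 639 / 3500 * x ^ 2 + 69 / 625 * x ^ 3 - 419 / 4375 * x ^ 4 -
    28 / 625 * x ^ 5 + 1332 / 4375 * x ^ 6 + 146 / 625 * x ^ 7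

/-- The quotient `sinePoly (fun j ↦ cosCoeff (2 * j)) 4 z / sin z`, as a polynomial in
`x = cos z`. -/
noncomputable def evenSineQuot (x : ℝ) : ℝ :=
  3499 / 10000 + 301 / 2500 * x + 191 / 2500 * x ^ 2 + 73 / 2500 * x ^ 3

lemma sinePoly_cosCoeff (z : ℝ) : sinePoly cosCoeff 8 z = sin z * sineQuot (cos z) := by
  rw [sinePoly, sum_cosCoeff_mul, sineQuot]
  have h₂ := sin_add_two_mul 0 z
  have h₃ := sin_add_two_mul 1 z
  have h₄ := sin_add_two_mul 2 z
  have h₅ := sin_add_two_mul 3 z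
  have h₆ := sin_add_two_mul 4 z
  have h₇ := sin_add_two_mul 5 z
  have h₈ := sin_add_two_mul 6 z
  norm_num1 at h₂ h₃ h₄ h₅ h₆ h₇ h₈
  push_cast
  rw [h₈, h₇, h₆, h₅, h₄, h₃, h₂]
  simp only [one_mul, zero_mul, sin_zero]
  ring

lemma sinePoly_cosCoeff_two_mul (z : ℝ) :
    sinePoly (fun j ↦ cosCoeff (2 * j)) 4 z = sin z * evenSineQuot (cos z) := by
  rw [sinePoly, sum_cosCoeff_two_mul_mul, evenSineQuot]
  have h₂ := sin_add_two_mul 0 z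
  have h₃ := sin_add_two_mul 1 z
  have h₄ := sin_add_two_mul 2 z
  norm_num1 at h₂ h₃ h₄
  push_cast
  rw [h₄, h₃, h₂]
  simp only [one_mul, zero_mul, sin_zero]
  ring

lemma sin_le_of_sq_add_sq_eq_one (z : ℝ) {c s : ℝ} (hs : 0 < s) (h : c ^ 2 + s ^ 2 = 1) :
    sin z ≤ (1 - cos z * c) / s := by
  rw [le_div_iff₀ hs]
  nlinarith [sin_sq_add_cos_sq z, sq_nonneg (cos z - c), sq_nonneg (sin z - s)]

/- The polynomial inequalities below are certified by Bernstein expansions with nonnegative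
coefficients. In the bounds for `sin z * quot (cos z)`, `sin z` is first replaced by a tangent line
to the unit circle, which is linear in `cos z`. -/
lemma sineQuot_nonneg (hx : x ∈ Set.Icc (-1) 1) : 0 ≤ sineQuot x := by
  obtain ⟨hx₀, hx₁⟩ := hx
  have : 0 ≤ x + 1 := by linarith
  have : 0 ≤ 1 - x := by linarith
  have : 0 ≤
      6159 / 1280000 * (1 - x) ^ 7 +
      47319 / 1280000 * (x + 1) * (1 - x) ^ 6 +
      26003 / 256000 * (x + 1) ^ 2 * (1 - x) ^ 5 +
      2285097 / 8960000 * (x + 1) ^ 3 * (1 - x) ^ 4 +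
      1256419 / 8960000 * (x + 1) ^ 4 * (1 - x) ^ 3 +
      270413 / 1280000 * (x + 1) ^ 5 * (1 - x) ^ 2 +
      47181 / 1280000 * (x + 1) ^ 6 * (1 - x) +
      17677 / 1280000 * (x + 1) ^ 7 := by
    positivity
  rw [sineQuot]
  linarith

lemma sin_mul_sineQuot_le_of_cos_nonneg (h : 0 ≤ cos z) :
    sin z * sineQuot (cos z) ≤ 0.0775 * (3.5 * 3.1415 + cos z) := by
  have hquot := sineQuot_nonneg ⟨neg_one_le_cos z, cos_le_one z⟩
  have hcos := cos_le_one z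
  set x := cos z
  rcases le_total x (47 / 100) with h' | h'
  · have : 0 ≤ 47 / 100 - x := by linarith
    have : 0 ≤
        3828943750000000 / 500037019896981 * (47 / 100 - x) ^ 8 +
        32878208750000000 / 500037019896981 * x * (47 / 100 - x) ^ 7 +
        39286209362500000 / 166679006632327 * x ^ 2 * (47 / 100 - x) ^ 6 +
        229783910022500000 / 500037019896981 * x ^ 3 * (47 / 100 - x) ^ 5 +
        37871947106960000 / 71433859985283 * x ^ 4 * (47 / 100 - x) ^ 4 +
        61173916198544600 / 166679006632327 * x ^ 5 * (47 / 100 - x) ^ 3 +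
        10341090149901032 / 71433859985283 * x ^ 6 * (47 / 100 - x) ^ 2 +
        15686229921476661 / 595282166544025 * x ^ 7 * (47 / 100 - x) +
        25659173286026057 / 59528216654402500 * x ^ 8 := by
      positivity
    refine (mul_le_mul_of_nonneg_right (sin_le_of_sq_add_sq_eq_one z (c := 7 / 25) (s := 24 / 25)
      (by norm_num) (by norm_num)) hquot).trans ?_
    rw [sineQuot]
    linarith
  · have : 0 ≤ x - 47 / 100 := by linarith
    have : 0 ≤ 1 - x := by linarith
    have : 0 ≤
        99702102978604359 / 77824613014201250 * (1 - x) ^ 8 +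
        60660426075959726 / 1556492260284025 * (x - 47 / 100) * (1 - x) ^ 7 +
        14607897089270376 / 62259690411361 * (x - 47 / 100) ^ 2 * (1 - x) ^ 6 +
        283956560839543600 / 435817832879527 * (x - 47 / 100) ^ 3 * (1 - x) ^ 5 +
        436703436207560000 / 435817832879527 * (x - 47 / 100) ^ 4 * (1 - x) ^ 4 +
        387800188309000000 / 435817832879527 * (x - 47 / 100) ^ 5 * (1 - x) ^ 3 +
        27240019625000000 / 62259690411361 * (x - 47 / 100) ^ 6 * (1 - x) ^ 2 +
        6369127500000000 / 62259690411361 * (x - 47 / 100) ^ 7 * (1 - x) +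
        457818750000000 / 62259690411361 * (x - 47 / 100) ^ 8 := by
      positivity
    refine (mul_le_mul_of_nonneg_right (sin_le_of_sq_add_sq_eq_one z (c := 3 / 5) (s := 4 / 5)
      (by norm_num) (by norm_num)) hquot).trans ?_
    rw [sineQuot]
    linarith

lemma sin_mul_sineQuot_le_of_cos_nonpos (h : cos z ≤ 0) :
    sin z * sineQuot (cos z) ≤ 0.0775 * (3.5 * 3.1415 + 3.1415 / 2 * cos z) := by
  have hquot := sineQuot_nonneg ⟨neg_one_le_cos z, cos_le_one z⟩
  have hcos := neg_one_le_cos z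
  set x := cos z
  have : 0 ≤ x + 1 := by linarith
  have : 0 ≤ -x := by linarith
  have : 0 ≤
      91599 / 800000 * (-x) ^ 8 +
      1323877 / 1600000 * (x + 1) * (-x) ^ 7 +
      1023999 / 320000 * (x + 1) ^ 2 * (-x) ^ 6 +
      68361247 / 11200000 * (x + 1) ^ 3 * (-x) ^ 5 +
      2222167 / 320000 * (x + 1) ^ 4 * (-x) ^ 4 +
      57772521 / 11200000 * (x + 1) ^ 5 * (-x) ^ 3 +
      26282919 / 11200000 * (x + 1) ^ 6 * (-x) ^ 2 +
      1271601 / 2240000 * (x + 1) ^ 7 * (-x) +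
      577797 / 11200000 * (x + 1) ^ 8 := by
    positivity
  refine (mul_le_mul_of_nonneg_right (sin_le_of_sq_add_sq_eq_one z (c := 0) (s := 1)
    (by norm_num) (by norm_num)) hquot).trans ?_
  rw [sineQuot]
  linarith

lemma evenSineQuot_nonneg (hx : x ∈ Set.Icc (-1) 1) : 0 ≤ evenSineQuot x := by
  obtain ⟨hx₀, hx₁⟩ := hx
  have : 0 ≤ x + 1 := by linarith
  have : 0 ≤ 1 - x := by linarith
  have : 0 ≤
      2767 / 80000 * (1 - x) ^ 3 +
      1881 / 16000 * (x + 1) * (1 - x) ^ 2 +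
      10061 / 80000 * (x + 1) ^ 2 * (1 - x) +
      5759 / 80000 * (x + 1) ^ 3 := by
    positivity
  rw [evenSineQuot]
  linarith

lemma sin_mul_evenSineQuot_le_of_cos_nonneg (h : 0 ≤ cos z) :
    sin z * evenSineQuot (cos z) ≤ 0.0765 * (1.5 * 3.1415 + cos z) := by
  have hquot := evenSineQuot_nonneg ⟨neg_one_le_cos z, cos_le_one z⟩
  have hcos := cos_le_one z
  set x := cos z
  rcases le_total x (61 / 100) with h' | h'
  · have : 0 ≤ 61 / 100 - x := by linarith
    have : 0 ≤
        367925 / 27691682 * (61 / 100 - x) ^ 4 +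
        5353435 / 27691682 * x * (61 / 100 - x) ^ 3 +
        50204813 / 138458410 * x ^ 2 * (61 / 100 - x) ^ 2 +
        1228743153 / 6922920500 * x ^ 3 * (61 / 100 - x) +
        2072718137 / 1384584100000 * x ^ 4 := by
      positivity
    refine (mul_le_mul_of_nonneg_right (sin_le_of_sq_add_sq_eq_one z (c := 9 / 41) (s := 40 / 41)
      (by norm_num) (by norm_num)) hquot).trans ?_
    rw [evenSineQuot]
    linarith
  · have : 0 ≤ x - 61 / 100 := by linarith
    have : 0 ≤ 1 - x := by linarith
    have : 0 ≤
        16237133113 / 13880646000 * (1 - x) ^ 4 +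
        1994345923 / 347016150 * (x - 61 / 100) * (1 - x) ^ 3 +
        23572660 / 2313441 * (x - 61 / 100) ^ 2 * (1 - x) ^ 2 +
        54781325 / 6940323 * (x - 61 / 100) ^ 3 * (1 - x) +
        31832275 / 13880646 * (x - 61 / 100) ^ 4 := by
      positivity
    refine (mul_le_mul_of_nonneg_right (sin_le_of_sq_add_sq_eq_one z (c := 5 / 13) (s := 12 / 13)
      (by norm_num) (by norm_num)) hquot).trans ?_
    rw [evenSineQuot]
    linarith

lemma sin_mul_evenSineQuot_le_of_cos_nonpos (h : cos z ≤ 0) :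
    sin z * evenSineQuot (cos z) ≤ 0.0765 * (1.5 * 3.1415 + 3.1415 / 2 * cos z) := by
  have hquot := evenSineQuot_nonneg ⟨neg_one_le_cos z, cos_le_one z⟩
  have hcos := neg_one_le_cos z
  set x := cos z
  rcases le_total x (-7 / 50) with h' | h'
  · have : 0 ≤ x + 1 := by linarith
    have : 0 ≤ -7 / 50 - x := by linarith
    have : 0 ≤
        16757425 / 164102448 * (-7 / 50 - x) ^ 4 +
        78389257 / 218803264 * (x + 1) * (-7 / 50 - x) ^ 3 +
        289538969 / 656409792 * (x + 1) ^ 2 * (-7 / 50 - x) ^ 2 +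
        3259926761 / 16410244800 * (x + 1) ^ 3 * (-7 / 50 - x) +
        42077221 / 27350408000 * (x + 1) ^ 4 := by
      positivity
    refine (mul_le_mul_of_nonneg_right (sin_le_of_sq_add_sq_eq_one z (c := -5 / 13) (s := 12 / 13)
      (by norm_num) (by norm_num)) hquot).trans ?_
    rw [evenSineQuot]
    linarith
  · have : 0 ≤ x + 7 / 50 := by linarith
    have : 0 ≤ -x := by linarith
    have : 0 ≤
        92030773 / 3841600 * (-x) ^ 4 +
        395335473 / 3841600 * (x + 7 / 50) * (-x) ^ 3 +
        24850045 / 153664 * (x + 7 / 50) ^ 2 * (-x) ^ 2 +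
        16952707 / 153664 * (x + 7 / 50) ^ 3 * (-x) +
        2117425 / 76832 * (x + 7 / 50) ^ 4 := by
      positivity
    refine (mul_le_mul_of_nonneg_right (sin_le_of_sq_add_sq_eq_one z (c := 0) (s := 1)
      (by norm_num) (by norm_num)) hquot).trans ?_
    rw [evenSineQuot]
    linarith

lemma le_pi_div_two_sub_cos (hz : z ≤ π) (h : 0 ≤ cos z) : z ≤ π / 2 - cos z := by
  have hzπ : z ≤ π / 2 := by
    by_contra! hlt
    exact h.not_gt (cos_neg_of_pi_div_two_lt_of_lt hlt (by linarith [pi_pos]))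
  have hsin := sin_le (x := π / 2 - z) (by linarith)
  rw [sin_pi_div_two_sub] at hsin
  linarith

lemma le_pi_div_two_sub_mul_cos (hz : z ≤ π) (h : cos z ≤ 0) :
    z ≤ π / 2 - π / 2 * cos z := by
  rcases le_total z (π / 2) with hzπ | hzπ
  · nlinarith [pi_pos]
  · have hsin := mul_le_sin (x := z - π / 2) (by linarith) (by linarith)
    rw [sin_sub_pi_div_two, div_mul_eq_mul_div, div_le_iff₀ pi_pos] at hsin
    linarith

lemma sinePoly_cosCoeff_nonneg (hz : z ∈ Set.Icc 0 π) : 0 ≤ sinePoly cosCoeff 8 z := by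
  rw [sinePoly_cosCoeff]
  exact mul_nonneg (sin_nonneg_of_mem_Icc hz) (sineQuot_nonneg ⟨neg_one_le_cos z, cos_le_one z⟩)

lemma sinePoly_cosCoeff_two_mul_nonneg (hz : z ∈ Set.Icc 0 π) :
    0 ≤ sinePoly (fun j ↦ cosCoeff (2 * j)) 4 z := by
  rw [sinePoly_cosCoeff_two_mul]
  exact mul_nonneg (sin_nonneg_of_mem_Icc hz)
    (evenSineQuot_nonneg ⟨neg_one_le_cos z, cos_le_one z⟩)

lemma sinePoly_cosCoeff_le (hz : z ≤ π) : sinePoly cosCoeff 8 z ≤ 0.0775 * (4 * π - z) := by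
  rw [sinePoly_cosCoeff]
  rcases le_total 0 (cos z) with h | h
  · linarith [sin_mul_sineQuot_le_of_cos_nonneg h, le_pi_div_two_sub_cos hz h, pi_gt_d4]
  · nlinarith [sin_mul_sineQuot_le_of_cos_nonpos h, le_pi_div_two_sub_mul_cos hz h, pi_gt_d4,
      neg_one_le_cos z]

lemma sinePoly_cosCoeff_two_mul_le (hz : z ≤ π) :
    sinePoly (fun j ↦ cosCoeff (2 * j)) 4 z ≤ 0.0765 * (2 * π - z) := by
  rw [sinePoly_cosCoeff_two_mul]
  rcases le_total 0 (cos z) with h | h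
  · linarith [sin_mul_evenSineQuot_le_of_cos_nonneg h, le_pi_div_two_sub_cos hz h, pi_gt_d4]
  · nlinarith [sin_mul_evenSineQuot_le_of_cos_nonpos h, le_pi_div_two_sub_mul_cos hz h, pi_gt_d4,
      neg_one_le_cos z]

/- Write `u = 2 * π * m + r` with `m = ⌊u / (2 * π)⌋ ≥ j`. Only `r > π` makes `sinePoly c d u`
negative, and then the bound applies to `z = 2 * π - r`. -/
lemma neg_sinePoly_le_mul {d : ℕ} {j : ℤ}
    (hK : 0 ≤ K) (hnonneg : ∀ z ∈ Set.Icc 0 π, 0 ≤ sinePoly c d z)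
    (hle : ∀ z ≤ π, sinePoly c d z ≤ K * (2 * π * (j + 1) - z)) (hu₀ : 0 ≤ u)
    (hu : 2 * π * j ≤ u) : -sinePoly c d u ≤ K * u := by
  have hπ := two_pi_pos
  set m : ℤ := ⌊u / (2 * π)⌋ with hm
  have hmu : m * (2 * π) ≤ u := by
    rw [← le_div_iff₀ hπ]
    exact Int.floor_le _
  have hjm : (j : ℝ) ≤ m := by
    rw [Int.cast_le, hm, Int.le_floor, le_div_iff₀ hπ]
    linarith
  rcases le_total (u - m * (2 * π)) π with h | h
  · have hpos := hnonneg (u - m * (2 * π)) ⟨by linarith, h⟩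
    rw [(periodic_sinePoly c d).sub_int_mul_eq] at hpos
    have := mul_nonneg hK hu₀
    linarith
  · have hz := hle ((m + 1 : ℤ) * (2 * π) - u) (by push_cast; linarith)
    rw [(periodic_sinePoly c d).int_mul_sub_eq, sinePoly_neg] at hz
    push_cast at hz
    calc -sinePoly c d u ≤ K * (2 * π * (j + 1) - ((m + 1) * (2 * π) - u)) := hz
      _ ≤ K * u := by
        gcongr
        linarith [mul_le_mul_of_nonneg_left hjm hπ.le]

lemma neg_sinePoly_cosCoeff_le (hu : 2 * π ≤ u) : -sinePoly cosCoeff 8 u ≤ 0.0775 * u := by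
  refine neg_sinePoly_le_mul (j := 1) (by norm_num) (fun _ ↦ sinePoly_cosCoeff_nonneg)
    (fun z hz ↦ (sinePoly_cosCoeff_le hz).trans_eq ?_) (two_pi_pos.le.trans hu) (by simpa using hu)
  push_cast
  ring

lemma neg_sinePoly_cosCoeff_two_mul_le (hu : 0 ≤ u) :
    -sinePoly (fun j ↦ cosCoeff (2 * j)) 4 u ≤ 0.0765 * u := by
  refine neg_sinePoly_le_mul (j := 0) (by norm_num) (fun _ ↦ sinePoly_cosCoeff_two_mul_nonneg)
    (fun z hz ↦ (sinePoly_cosCoeff_two_mul_le hz).trans_eq ?_) hu (by simpa using hu)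
  push_cast
  ring

end SinePolynomials

section AwayFromPeak

open Finset Real

variable {n m : ℕ} {t u θ φ δ : ℝ} {c : ℕ → ℝ}

lemma abs_two_mul_sin_le_exp (x : ℝ) :
    |2 * sin (x / 2)| ≤ exp (0.08 - ∑ j ∈ Icc 1 8, cosCoeff j * cos (j * x)) := by
  rcases eq_or_ne (sin (x / 2)) 0 with h | h
  · simpa only [h, mul_zero, abs_zero] using (exp_pos _).le
  have hlog := log_four_mul_div_two_le (sq_pos_of_ne_zero h) (sin_sq_le_one _)
  have hsq : 4 * sin (x / 2) ^ 2 = (2 * sin (x / 2)) ^ 2 := by ring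
  have hcos : cos x = 1 - 2 * sin (x / 2) ^ 2 := by
    rw [sin_sq_eq_half_sub, mul_div_cancel₀ x two_ne_zero]
    ring
  have hpoly : logMajorant (sin (x / 2) ^ 2) =
      0.08 - ∑ j ∈ Icc 1 8, cosCoeff j * cos (j * x) := by
    have h₂ := cos_add_two_mul 0 x
    have h₃ := cos_add_two_mul 1 x
    have h₄ := cos_add_two_mul 2 x
    have h₅ := cos_add_two_mul 3 x
    have h₆ := cos_add_two_mul 4 x
    have h₇ := cos_add_two_mul 5 x
    have h₈ := cos_add_two_mul 6 x
    norm_num1 at h₂ h₃ h₄ h₅ h₆ h₇ h₈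
    rw [sum_cosCoeff_mul, logMajorant]
    push_cast
    rw [h₈, h₇, h₆, h₅, h₄, h₃, h₂]
    simp only [one_mul, zero_mul, cos_zero]
    rw [hcos]
    ring
  rw [hsq, log_pow, Nat.cast_ofNat, mul_div_cancel_left₀ _ two_ne_zero, hpoly] at hlog
  rwa [← log_le_iff_le_exp (abs_pos.2 (mul_ne_zero two_ne_zero h)), log_abs]

/-- Minus the Dirichlet cosine sum, `-∑ k ∈ Icc 1 n, cos (k * t)`. It bounds `log |sineProd n θ|`
through the cosine majorant of `log |2 * sin (x / 2)|`. -/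
noncomputable def negCosSum (n : ℕ) (t : ℝ) : ℝ :=
  -∑ k ∈ Icc 1 n, cos (k * t)

lemma abs_sineProd_le_exp (n : ℕ) (θ : ℝ) :
    |sineProd n θ| ≤ exp (0.08 * n + ∑ j ∈ Icc 1 8, cosCoeff j * negCosSum n (j * θ)) := by
  have hexp : ∑ k ∈ Icc 1 n, (0.08 - ∑ j ∈ Icc 1 8, cosCoeff j * cos (j * (k * θ))) =
      0.08 * n + ∑ j ∈ Icc 1 8, cosCoeff j * negCosSum n (j * θ) := by
    simp only [negCosSum, mul_neg, mul_sum, sum_neg_distrib, sum_sub_distrib, sum_const,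
      Nat.card_Icc, Nat.add_sub_cancel, nsmul_eq_mul]
    rw [sum_comm, sub_eq_add_neg, mul_comm]
    simp only [mul_left_comm]
  rw [sineProd, abs_prod, ← hexp, exp_sum]
  exact prod_le_prod (fun _ _ ↦ abs_nonneg _) fun k _ ↦ abs_two_mul_sin_le_exp _

lemma negCosSum_neg (n : ℕ) (t : ℝ) : negCosSum n (-t) = negCosSum n t := by
  simp only [negCosSum, mul_neg, cos_neg]

lemma negCosSum_abs (n : ℕ) (t : ℝ) : negCosSum n |t| = negCosSum n t := by
  rcases abs_choice t with h | h
  · rw [h]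
  · rw [h, negCosSum_neg]

lemma periodic_negCosSum (n : ℕ) : Function.Periodic (negCosSum n) (2 * π) := fun t ↦ by
  simp only [negCosSum, mul_add, cos_add_nat_mul_two_pi]

lemma negCosSum_zero (n : ℕ) : negCosSum n 0 = -n := by
  simp [negCosSum]

lemma negCosSum_mul (n : ℕ) (t : ℝ) :
    negCosSum n t * (2 * sin (t / 2)) = sin (t / 2) - sin ((n + 1 / 2) * t) := by
  induction n with
  | zero =>
    simp only [negCosSum, zero_lt_one, Icc_eq_empty_of_lt, sum_empty, neg_zero, zero_mul,
      Nat.cast_zero, zero_add, one_div_mul_eq_div, sub_self]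
  | succ n ih =>
    have hsum : negCosSum (n + 1) t = negCosSum n t - cos ((n + 1 : ℕ) * t) := by
      rw [negCosSum, sum_Icc_succ_top (by lia), negCosSum]
      ring
    have hadd := sin_add ((n + 1 : ℕ) * t) (t / 2)
    have hsub := sin_sub ((n + 1 : ℕ) * t) (t / 2)
    rw [show (n + 1 : ℕ) * t + t / 2 = ((n + 1 : ℕ) + 1 / 2) * t by ring] at hadd
    rw [show (n + 1 : ℕ) * t - t / 2 = (n + 1 / 2) * t by push_cast; ring] at hsub
    rw [hsum, sub_mul, ih]
    linarith

lemma negCosSum_eq (h : sin (t / 2) ≠ 0) :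
    negCosSum n t = 1 / 2 - sin ((n + 1 / 2) * t) / (2 * sin (t / 2)) := by
  rw [← mul_div_cancel_right₀ (negCosSum n t) (mul_ne_zero two_ne_zero h), negCosSum_mul]
  field

lemma negCosSum_le_of_le_abs_sin (hδ : 0 < δ) (h : δ ≤ |sin (t / 2)|) :
    negCosSum n t ≤ 1 / 2 + 1 / (2 * δ) := by
  rw [negCosSum_eq (abs_pos.1 (hδ.trans_le h)), sub_eq_add_neg]
  gcongr
  calc -(sin ((n + 1 / 2) * t) / (2 * sin (t / 2)))
      ≤ |sin ((n + 1 / 2) * t) / (2 * sin (t / 2))| := neg_le_abs _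
    _ = |sin ((n + 1 / 2) * t)| / (2 * |sin (t / 2)|) := by rw [abs_div, abs_mul, abs_two]
    _ ≤ 1 / (2 * δ) := by
      gcongr
      exact abs_sin_le_one _

lemma one_div_two_mul_sin_mem_Icc (ht : 0 < t) (ht' : t ≤ 2.6) :
    1 / (2 * sin (t / 2)) ∈ Set.Icc (1 / t) (1 / t + 0.16) := by
  have hcube := sin_ge_sub_cube (x := t / 2) (by positivity)
  have hsin : 0 < sin (t / 2) := sin_pos_of_pos_of_lt_pi (by positivity) (by linarith [pi_gt_three])
  have hle : sin (t / 2) ≤ t / 2 := sin_le (by positivity)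
  constructor
  · exact one_div_le_one_div_of_le (by positivity) (by linarith)
  · rw [div_add' _ _ _ ht.ne', div_le_div_iff₀ (by positivity) ht]
    nlinarith [mul_le_mul_of_nonneg_left hcube (show 0 ≤ 1 + 0.16 * t by positivity), sq_nonneg t,
      mul_pos ht ht, mul_pos (mul_pos ht ht) ht]

lemma negCosSum_le_sub (n : ℕ) (ht : 0 < t) (ht' : t ≤ 2.6) :
    negCosSum n t ≤ 0.66 - sin ((n + 1 / 2) * t) / t := by
  obtain ⟨hlow, hupp⟩ := one_div_two_mul_sin_mem_Icc ht ht'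
  have hsin : 0 < sin (t / 2) := sin_pos_of_pos_of_lt_pi (by positivity) (by linarith [pi_gt_three])
  rw [negCosSum_eq hsin.ne', div_eq_mul_one_div (sin ((n + 1 / 2) * t)),
    div_eq_mul_one_div (sin ((n + 1 / 2) * t)) t]
  nlinarith [sin_le_one ((n + 1 / 2) * t), neg_one_le_sin ((n + 1 / 2) * t)]

lemma neg_sin_le_mul (hu : 0 ≤ u) : -sin u ≤ 0.2417 * u := by
  rcases le_total u π with hπ | hπ
  · have := sin_nonneg_of_nonneg_of_le_pi hu hπ
    linarith
  rcases le_total u 4.14 with h | h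
  · have hsin := sin_le (x := u - π) (by linarith)
    rw [sin_sub_pi] at hsin
    linarith [pi_gt_d4]
  · linarith [neg_one_le_sin u]

lemma negCosSum_le (hn : 2 ≤ n) (t : ℝ) : negCosSum n t ≤ 0.66 + 0.2417 * (n + 1 / 2) := by
  have hn' : (2 : ℝ) ≤ n := by exact_mod_cast hn
  obtain ⟨y, ⟨hy, hy'⟩, hty⟩ := (periodic_negCosSum n).exists_mem_Ioc two_pi_pos t (-π)
  have hyπ : |y| ≤ π := abs_le.2 ⟨hy.le, by linarith⟩
  rw [hty, ← negCosSum_abs]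
  rcases (abs_nonneg y).eq_or_lt with h₀ | h₀
  · rw [← h₀, negCosSum_zero]
    linarith
  rcases le_total |y| 2.6 with h | h
  · have hsin := neg_sin_le_mul (u := (n + 1 / 2) * |y|) (by positivity)
    have : -(sin ((n + 1 / 2) * |y|) / |y|) ≤ 0.2417 * (n + 1 / 2) := by
      rw [← neg_div, div_le_iff₀ h₀]
      linarith
    linarith [negCosSum_le_sub n h₀ h]
  · have hsin := mul_le_sin (x := |y| / 2) (by positivity) (by linarith)
    rw [div_mul_eq_mul_div, div_le_iff₀ pi_pos] at hsin
    have hδ : 0.82 ≤ |sin (|y| / 2)| := (le_abs_self _).trans' (by nlinarith [pi_lt_d4])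
    have hfar := negCosSum_le_of_le_abs_sin (n := n) (by norm_num) hδ
    norm_num at hfar
    linarith

lemma sum_mul_negCosSum_le (hc : ∀ j, 0 ≤ c j) (ht : 0 < t) (ht' : m * t ≤ 2.6) :
    ∑ j ∈ Icc 1 m, c j * negCosSum n (j * t) ≤
      0.66 * ∑ j ∈ Icc 1 m, c j - sinePoly c m ((n + 1 / 2) * t) / t := by
  rw [sinePoly, mul_sum, sum_div, ← sum_sub_distrib]
  refine sum_le_sum fun j hj ↦ ?_
  obtain ⟨hj₁, hjm⟩ := mem_Icc.1 hj
  have : (0 : ℝ) < j := by exact_mod_cast hj₁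
  have hjt : j * t ≤ 2.6 := by
    refine ht'.trans' ?_
    gcongr
  calc c j * negCosSum n (j * t)
      ≤ c j * (0.66 - sin ((n + 1 / 2) * (j * t)) / (j * t)) := by
        gcongr
        · exact hc j
        · exact negCosSum_le_sub n (by positivity) hjt
    _ = 0.66 * c j - c j * (sin (j * ((n + 1 / 2) * t)) / j) / t := by
      rw [mul_left_comm (j : ℝ)]
      field

lemma abs_sineProd_le_exp_of_le (hn : 600 ≤ n) (hθ : 2 * π / n ≤ θ) (hθ' : θ ≤ 0.325) :
    |sineProd n θ| ≤ exp (0.1605 * n) := by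
  have hn' : (600 : ℝ) ≤ n := by exact_mod_cast hn
  have hθ₀ : 0 < θ := hθ.trans_lt' (by positivity)
  have hu : 2 * π ≤ (n + 1 / 2) * θ := by
    rw [div_le_iff₀' (by positivity)] at hθ
    linarith
  have hsum := sum_mul_negCosSum_le (n := n) (m := 8) cosCoeff_nonneg hθ₀
    (by push_cast; linarith)
  have hcoeff := sum_cosCoeff_mul fun _ ↦ 1
  simp only [mul_one] at hcoeff
  have hpoly : -(sinePoly cosCoeff 8 ((n + 1 / 2) * θ) / θ) ≤ 0.0775 * (n + 1 / 2) := by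
    rw [← neg_div, div_le_iff₀ hθ₀]
    linarith [neg_sinePoly_cosCoeff_le hu]
  refine (abs_sineProd_le_exp n θ).trans (exp_le_exp.2 ?_)
  rw [hcoeff] at hsum
  linarith

lemma negCosSum_odd_mul_pi_sub_le {j : ℕ} (hj : Odd j) (hφ : 0 ≤ φ) (hjφ : j * φ ≤ 1.1375) :
    negCosSum n (j * (π - φ)) ≤ 1.11 := by
  have hsin : 0.82 ≤ |sin (j * (π - φ) / 2)| := by
    rw [← abs_of_pos (show (0 : ℝ) < 0.82 by norm_num), ← sq_le_sq, sin_sq_eq_half_sub,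
      mul_div_cancel₀ _ two_ne_zero, mul_sub, cos_nat_mul_pi_sub, hj.neg_one_pow]
    have : 0 ≤ j * φ := by positivity
    nlinarith [one_sub_sq_div_two_le_cos (x := j * φ)]
  exact (negCosSum_le_of_le_abs_sin (by norm_num) hsin).trans (by norm_num)

lemma negCosSum_two_mul_pi_sub (n i : ℕ) (φ : ℝ) :
    negCosSum n ((2 * i : ℕ) * (π - φ)) = negCosSum n (i * (2 * φ)) := by
  rw [← negCosSum_neg, ← (periodic_negCosSum n).nat_mul i]
  congr 1
  push_cast
  ring

lemma sum_cosCoeff_mul_negCosSum_two_mul_le (hφ : 0 ≤ φ) (hφ' : φ ≤ 0.1625) :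
    ∑ i ∈ Icc 1 4, cosCoeff (2 * i) * negCosSum n (i * (2 * φ)) ≤
      0.3803 + 0.0765 * (n + 1 / 2) := by
  have hcoeff := sum_cosCoeff_two_mul_mul fun _ ↦ 1
  simp only [mul_one] at hcoeff
  rcases hφ.eq_or_lt with rfl | hφ₀
  · simp only [mul_zero, negCosSum_zero, mul_neg, sum_neg_distrib, ← sum_mul, hcoeff]
    have : (0 : ℝ) ≤ n := n.cast_nonneg
    linarith
  have hsum := sum_mul_negCosSum_le (n := n) (m := 4) (fun j ↦ cosCoeff_nonneg (2 * j))
    (mul_pos two_pos hφ₀) (by push_cast; linarith)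
  have hpoly : -(sinePoly (fun j ↦ cosCoeff (2 * j)) 4 ((n + 1 / 2) * (2 * φ)) / (2 * φ)) ≤
      0.0765 * (n + 1 / 2) := by
    rw [← neg_div, div_le_iff₀ (by positivity)]
    linarith [neg_sinePoly_cosCoeff_two_mul_le (u := (n + 1 / 2) * (2 * φ)) (by positivity)]
  rw [hcoeff] at hsum
  linarith

lemma abs_sineProd_pi_sub_le_exp (hn : 600 ≤ n) (hφ : 0 ≤ φ) (hφ' : φ ≤ 0.1625) :
    |sineProd n (π - φ)| ≤ exp (0.1605 * n) := by
  have hn' : (600 : ℝ) ≤ n := by exact_mod_cast hn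
  have h₁ := negCosSum_odd_mul_pi_sub_le (n := n) (j := 1) (by decide) hφ (by push_cast; linarith)
  have h₃ := negCosSum_odd_mul_pi_sub_le (n := n) (j := 3) (by decide) hφ (by push_cast; linarith)
  have h₅ := negCosSum_odd_mul_pi_sub_le (n := n) (j := 5) (by decide) hφ (by push_cast; linarith)
  have h₇ := negCosSum_odd_mul_pi_sub_le (n := n) (j := 7) (by decide) hφ (by push_cast; linarith)
  have heven := sum_cosCoeff_mul_negCosSum_two_mul_le (n := n) hφ hφ'
  simp only [← negCosSum_two_mul_pi_sub, sum_cosCoeff_two_mul_mul] at heven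
  refine (abs_sineProd_le_exp n _).trans (exp_le_exp.2 ?_)
  rw [sum_cosCoeff_mul]
  linarith

lemma abs_sin_sub_le (x y : ℝ) : |sin (x - y)| ≤ |sin x| + |sin y| := by
  rw [sin_sub]
  calc |sin x * cos y - cos x * sin y| ≤ |sin x| * |cos y| + |cos x| * |sin y| := by
        simpa only [abs_mul] using abs_sub (sin x * cos y) (cos x * sin y)
    _ ≤ |sin x| * 1 + 1 * |sin y| := by
        gcongr <;> exact abs_cos_le_one _
    _ = |sin x| + |sin y| := by ring

lemma negCosSum_le_or_negCosSum_le {s : ℝ} (h : 0.16 ≤ |sin ((s - t) / 2)|) :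
    negCosSum n s ≤ 6.75 ∨ negCosSum n t ≤ 6.75 := by
  have hfar {x : ℝ} (hx : 0.08 ≤ |sin (x / 2)|) : negCosSum n x ≤ 6.75 :=
    (negCosSum_le_of_le_abs_sin (by norm_num) hx).trans (by norm_num)
  rw [sub_div] at h
  rcases le_total 0.08 |sin (s / 2)| with hs | hs
  · exact .inl (hfar hs)
  · exact .inr (hfar (by linarith [abs_sin_sub_le (s / 2) (t / 2)]))

/- Among three consecutive multiples of `θ` at most one has a large `negCosSum`. -/
lemma abs_sineProd_le_exp_of_le_abs_sin (hn : 600 ≤ n) (h : 0.16 ≤ |sin (θ / 2)|)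
    (h' : 0.16 ≤ |sin θ|) : |sineProd n θ| ≤ exp (0.1605 * n) := by
  have hn' : (600 : ℝ) ≤ n := by exact_mod_cast hn
  have hone (j : ℝ) : negCosSum n ((j + 1) * θ) ≤ 6.75 ∨ negCosSum n (j * θ) ≤ 6.75 :=
    negCosSum_le_or_negCosSum_le (by rwa [← sub_mul, add_sub_cancel_left, one_mul])
  have htwo (j : ℝ) : negCosSum n ((j + 2) * θ) ≤ 6.75 ∨ negCosSum n (j * θ) ≤ 6.75 :=
    negCosSum_le_or_negCosSum_le
      (by rwa [← sub_mul, add_sub_cancel_left, mul_div_cancel_left₀ _ two_ne_zero])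
  have h₁ := negCosSum_le_of_le_abs_sin (n := n) (by norm_num) h
  have h₂ := negCosSum_le_of_le_abs_sin (n := n) (t := 2 * θ) (δ := 0.16)
    (by norm_num) (by rwa [mul_div_cancel_left₀ _ two_ne_zero])
  have h₃₄ := hone 3
  have h₄₅ := hone 4
  have h₃₅ := htwo 3
  have h₆₇ := hone 6
  have h₇₈ := hone 7
  have h₆₈ := htwo 6
  norm_num1 at h₁ h₂ h₃₄ h₄₅ h₃₅ h₆₇ h₇₈ h₆₈
  have hbound (j : ℝ) := negCosSum_le (show 2 ≤ n by lia) (j * θ)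
  have h₃₄₅ : 0.2115 * negCosSum n (3 * θ) + 0.135 * negCosSum n (4 * θ) +
      0.089 * negCosSum n (5 * θ) ≤ 0.2115 * (0.66 + 0.2417 * (n + 1 / 2)) + 0.224 * 6.75 := by
    rcases h₃₄ with _ | _ <;> rcases h₄₅ with _ | _ <;> rcases h₃₅ with _ | _ <;>
      linarith [hbound 3, hbound 4, hbound 5]
  have h₆₇₈ : 0.0573 * negCosSum n (6 * θ) + 0.0333 * negCosSum n (7 * θ) +
      0.0146 * negCosSum n (8 * θ) ≤ 0.0573 * (0.66 + 0.2417 * (n + 1 / 2)) + 0.0479 * 6.75 := by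
    rcases h₆₇ with _ | _ <;> rcases h₇₈ with _ | _ <;> rcases h₆₈ with _ | _ <;>
      linarith [hbound 6, hbound 7, hbound 8]
  refine (abs_sineProd_le_exp n θ).trans (exp_le_exp.2 ?_)
  rw [sum_cosCoeff_mul]
  push_cast
  rw [one_mul]
  linarith

lemma le_of_sin_lt {x : ℝ} (hx : x ≤ π / 2) (h : sin x < 0.16) : x ≤ 0.1625 := by
  by_contra! hlt
  have hsin := sin_lt_sin_of_lt_of_le_pi_div_two (by linarith [pi_pos]) hx hlt
  have hcube := sin_ge_sub_cube (x := 0.1625) (by norm_num)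
  norm_num at hcube
  linarith

theorem abs_sineProd_le_exp_of_two_pi_div_le (hn : 600 ≤ n) (hθ : 2 * π / n ≤ θ) (hθ' : θ ≤ π) :
    |sineProd n θ| ≤ exp (0.1605 * n) := by
  have hθ₀ : 0 ≤ θ := hθ.trans' (by positivity)
  rcases lt_or_ge (sin (θ / 2)) 0.16 with h | h
  · exact abs_sineProd_le_exp_of_le hn hθ (by linarith [le_of_sin_lt (by linarith) h])
  rcases le_or_gt 0.16 (sin θ) with h' | h'
  · exact abs_sineProd_le_exp_of_le_abs_sin hn (h.trans (le_abs_self _)) (h'.trans (le_abs_self _))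
  have hθπ : π / 2 ≤ θ := by
    by_contra! hlt
    have := sin_le_sin_of_le_of_le_pi_div_two (x := θ / 2) (by linarith) hlt.le (by linarith)
    linarith
  rw [← sin_pi_sub] at h'
  simpa only [sub_sub_cancel] using
    abs_sineProd_pi_sub_le_exp hn (sub_nonneg.2 hθ') (le_of_sin_lt (by linarith) h')

end AwayFromPeak

section InnerIntegral

open Finset Real

variable {n : ℕ} {q q₀ x y α σ θ θ₀ : ℝ}

/-- The mean value of `sin t ^ (2 * m)` over a period. -/
noncomputable def sinPowMean (m : ℕ) : ℝ :=
  ∏ i ∈ range m, (2 * i + 1 : ℝ) / (2 * i + 2)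

lemma sinPowMean_nonneg (m : ℕ) : 0 ≤ sinPowMean m := by
  unfold sinPowMean
  positivity

lemma sinPowMean_sq_mul_le (m : ℕ) : sinPowMean m ^ 2 * (3 * m + 1) ≤ 1 := by
  induction m with
  | zero => simp [sinPowMean]
  | succ m ih =>
    have hstep : ((2 * m + 1 : ℝ) / (2 * m + 2)) ^ 2 * (3 * (m + 1 : ℕ) + 1) ≤ 3 * m + 1 := by
      rw [div_pow, div_mul_eq_mul_div, div_le_iff₀ (by positivity)]
      push_cast
      nlinarith [m.cast_nonneg (α := ℝ)]
    calc sinPowMean (m + 1) ^ 2 * (3 * (m + 1 : ℕ) + 1)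
        = sinPowMean m ^ 2 * (((2 * m + 1 : ℝ) / (2 * m + 2)) ^ 2 * (3 * (m + 1 : ℕ) + 1)) := by
          rw [sinPowMean, prod_range_succ, mul_pow, mul_assoc, sinPowMean]
      _ ≤ sinPowMean m ^ 2 * (3 * m + 1) := by gcongr
      _ ≤ 1 := ih

lemma integral_sin_pow_le {j m : ℕ} (hx : 0 ≤ x) (hxj : x ≤ j * π) :
    ∫ t in α..(α + x), sin t ^ (2 * m) ≤ j * (π * sinPowMean m) := by
  have hper : Function.Periodic (fun t ↦ sin t ^ (2 * m)) π := fun t ↦ by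
    simp only [sin_add_pi, pow_mul, neg_sq]
  have hcont (a b : ℝ) : IntervalIntegrable (fun t ↦ sin t ^ (2 * m)) MeasureTheory.volume a b :=
    (by fun_prop : Continuous _).intervalIntegrable _ _
  calc ∫ t in α..(α + x), sin t ^ (2 * m)
      ≤ ∫ t in α..(α + (j : ℤ) • π), sin t ^ (2 * m) := by
        refine intervalIntegral.integral_mono_interval le_rfl (by linarith) (by simpa using hxj)
          (.of_forall fun t ↦ ?_) (hcont _ _)
        exact (even_two_mul m).pow_nonneg _
    _ = j * (π * sinPowMean m) := by
      rw [hper.intervalIntegral_add_zsmul_eq j α hcont, hper.intervalIntegral_add_eq α 0, zero_add,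
        integral_sin_pow_even, sinPowMean, natCast_zsmul, nsmul_eq_mul]

lemma integral_sin_mul_add_pow_le {ω l : ℝ} (m : ℕ) (hω : 0 < ω) (hl : 0 ≤ l)
    (h : π / 2 ≤ ω * l) :
    ∫ θ in 0..l, sin (ω * θ + α) ^ (2 * m) ≤ 2 * l * sinPowMean m := by
  have hmean := sinPowMean_nonneg m
  have hr : 1 / 2 ≤ ω * l / π := by
    rw [le_div_iff₀ pi_pos]
    linarith
  have hceil : (⌈ω * l / π⌉₊ : ℝ) ≤ 2 * (ω * l / π) :=
    Nat.ceil_le_two_mul (by simpa using hr)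
  have hsinPow := integral_sin_pow_le (α := α) (m := m) (mul_nonneg hω.le hl)
    ((div_le_iff₀ pi_pos).1 (Nat.le_ceil (ω * l / π)))
  rw [intervalIntegral.integral_comp_mul_add (fun t ↦ sin t ^ (2 * m)) hω.ne', mul_zero, zero_add,
    smul_eq_mul, add_comm (ω * l)]
  calc ω⁻¹ * ∫ t in α..(α + ω * l), sin t ^ (2 * m)
      ≤ ω⁻¹ * (2 * (ω * l / π) * (π * sinPowMean m)) := by
        gcongr
        exact hsinPow.trans (by gcongr)
    _ = 2 * l * sinPowMean m := by field

lemma sinPowMean_mul_sqrt_le (n : ℕ) : sinPowMean (126 * n) * √n ≤ 1 / 19.442 := by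
  refine le_of_sq_le_sq ?_ (by norm_num)
  rw [mul_pow, sq_sqrt n.cast_nonneg]
  have hmean := sinPowMean_sq_mul_le (126 * n)
  push_cast at hmean
  nlinarith [sq_nonneg (sinPowMean (126 * n))]

lemma two_mul_sinPowMean_le (hn : 0 < n) :
    2 * (2 * π / n) * sinPowMean (126 * n) ≤ 1.94 / (n * √n) / 3 := by
  have : (0 : ℝ) < n := by exact_mod_cast hn
  have hmean := mul_le_mul pi_lt_d6.le (sinPowMean_mul_sqrt_le n)
    (mul_nonneg (sinPowMean_nonneg _) (sqrt_nonneg _)) (by norm_num)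
  calc 2 * (2 * π / n) * sinPowMean (126 * n)
      = 4 * (π * (sinPowMean (126 * n) * √n)) / (n * √n) := by field
    _ ≤ 4 * (3.141593 * (1 / 19.442)) / (n * √n) := by gcongr
    _ ≤ 1.94 / 3 / (n * √n) := by
      gcongr
      norm_num
    _ = 1.94 / (n * √n) / 3 := div_right_comm _ _ _

lemma abs_cos_le_cos (hx : 0 ≤ x) (hxy : x ≤ y) (h : x + y ≤ π) : |cos y| ≤ cos x := by
  refine abs_le'.2 ⟨cos_le_cos_of_nonneg_of_le_pi hx (by linarith) hxy, ?_⟩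
  rw [← cos_pi_sub]
  exact cos_le_cos_of_nonneg_of_le_pi hx (by linarith) (by linarith)

lemma add_cos_le_cos (hn : 0 < n) (hq₀ : 0 ≤ q₀) (hq : q₀ + 1 ≤ q) (hqn : q + q₀ ≤ n / 2)
    (hθ : 0.98 * π ≤ n * θ) (hθ' : n * θ / 2 ≤ π) :
    1.9 / n ^ 2 + cos (q * θ) ≤ cos (q₀ * θ) := by
  have hn₀ : (0 : ℝ) < n := by exact_mod_cast hn
  have hθ₀ : 0 < θ := pos_of_mul_pos_right (hθ.trans_lt' (by positivity)) hn₀.le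
  have hqθ : q * θ ≤ π := by nlinarith
  have hcos : cos (q * θ) ≤ cos ((q₀ + 1) * θ) :=
    cos_le_cos_of_nonneg_of_le_pi (by positivity) hqθ (by gcongr)
  have hsub : cos (q₀ * θ) - cos ((q₀ + 1) * θ) = 2 * sin ((q₀ + 1 / 2) * θ) * sin (θ / 2) := by
    rw [cos_sub_cos, show (q₀ * θ + (q₀ + 1) * θ) / 2 = (q₀ + 1 / 2) * θ by ring,
      show (q₀ * θ - (q₀ + 1) * θ) / 2 = -(θ / 2) by ring, sin_neg]
    ring
  have hjordan : θ / π ≤ sin (θ / 2) := by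
    refine (mul_le_sin (by positivity) (by nlinarith)).trans' (le_of_eq ?_)
    ring
  have hjordan' : θ / π ≤ sin ((q₀ + 1 / 2) * θ) := by
    refine (mul_le_sin (by positivity) (by nlinarith)).trans' ?_
    rw [div_mul_eq_mul_div]
    gcongr
    nlinarith
  have hdiv : 0.98 / n ≤ θ / π := by
    rw [div_le_div_iff₀ hn₀ pi_pos]
    linarith
  have hprod : 1.9 / n ^ 2 ≤ 2 * sin ((q₀ + 1 / 2) * θ) * sin (θ / 2) := by
    calc 1.9 / (n : ℝ) ^ 2 ≤ 2 * 0.98 ^ 2 / (n : ℝ) ^ 2 := by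
          gcongr
          norm_num
      _ = 2 * (0.98 / (n : ℝ)) * (0.98 / n) := by ring
      _ ≤ 2 * (θ / π) * (θ / π) := by gcongr
      _ ≤ 2 * sin ((q₀ + 1 / 2) * θ) * sin (θ / 2) := by
        have : 0 ≤ sin ((q₀ + 1 / 2) * θ) := hjordan'.trans' (by positivity)
        gcongr
  linarith

lemma sub_cos_le_cos (hn : 600 ≤ n) (hq₀ : q₀ ∈ Set.Icc 0 (1 / 2)) (hq : 0 ≤ q)
    (hqn : q ≤ n / 2) (hθ : 0 ≤ θ) (hθ' : n * θ / 2 ≤ 2.682) :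
    1.9 / n ^ 2 - cos (q * θ) ≤ cos (q₀ * θ) := by
  have hn' : (600 : ℝ) ≤ n := by exact_mod_cast hn
  obtain ⟨hq₀, hq₀'⟩ := hq₀
  have hqθ : q * θ ≤ 2.682 := by nlinarith
  have hq₀θ : q₀ * θ ≤ 0.01 := by nlinarith
  have hcos : -0.9 ≤ cos (q * θ) := by
    have hmono : cos 2.682 ≤ cos (q * θ) :=
      cos_le_cos_of_nonneg_of_le_pi (by positivity) (by linarith [pi_gt_d6]) hqθ
    have hfold : cos (π - 2.682) ≤ cos 0.4595 :=
      cos_le_cos_of_nonneg_of_le_pi (by norm_num) (by linarith) (by linarith [pi_gt_d6])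
    have hquartic := cos_le_quartic (x := 0.4595) (by norm_num)
    rw [cos_pi_sub] at hfold
    norm_num at hquartic hfold ⊢
    linarith
  have hsmall : 1.9 / (n : ℝ) ^ 2 ≤ 0.0001 := by
    rw [div_le_iff₀ (by positivity)]
    nlinarith
  have : 0 ≤ q₀ * θ := by positivity
  nlinarith [one_sub_sq_div_two_le_cos (x := q₀ * θ)]

lemma one_sub_pow_div_le {m : ℕ} (hx : 0 ≤ x) (hm : 0 < m) : (1 - x ^ m) / m ≤ 1 - x := by
  have hbernoulli := one_add_mul_le_pow (a := x - 1) (by linarith) m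
  rw [add_sub_cancel] at hbernoulli
  rw [div_le_iff₀ (by exact_mod_cast hm)]
  linarith

lemma exists_mul_cos_eq (hσ : σ = 1 ∨ σ = -1) (q : ℝ) :
    ∃ α, ∀ θ, σ * cos (q * θ) = 1 - 2 * sin (q / 2 * θ + α) ^ 2 := by
  rcases hσ with rfl | rfl
  · refine ⟨0, fun θ ↦ ?_⟩
    rw [sin_sq_eq_half_sub, show 2 * (q / 2 * θ + 0) = q * θ by ring]
    ring
  · refine ⟨π / 2, fun θ ↦ ?_⟩
    rw [sin_sq_eq_half_sub, show 2 * (q / 2 * θ + π / 2) = q * θ + π by ring, cos_add_pi]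
    ring

lemma le_cos_add_one_sub {m : ℕ} (hm : 0 < m) (hq₀ : q₀ ∈ Set.Icc 0 (1 / 2))
    (hθ : θ ∈ Set.Icc 0 (2 * π / n)) (x : ℝ) :
    2 / m * (1 - sin x ^ (2 * m)) - π ^ 2 / (2 * n ^ 2) ≤
      cos (q₀ * θ) + (1 - 2 * sin x ^ 2) := by
  have hsq : (q₀ * θ) ^ 2 / 2 ≤ π ^ 2 / (2 * n ^ 2) := by
    calc (q₀ * θ) ^ 2 / 2 ≤ (1 / 2 * (2 * π / n)) ^ 2 / 2 := by
          have := hq₀.1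
          have := hθ.1
          gcongr
          exacts [hq₀.2, hθ.2]
      _ = π ^ 2 / (2 * n ^ 2) := by ring
  have hpow := one_sub_pow_div_le (sq_nonneg (sin x)) hm
  rw [← pow_mul] at hpow
  rw [div_mul_eq_mul_div, mul_div_assoc]
  linarith [one_sub_sq_div_two_le_cos (x := q₀ * θ)]

namespace IsFirstArchMax

lemma le_integral_of_add_le (h : IsFirstArchMax n θ₀) (hn : 600 ≤ n)
    (hq₀ : q₀ ∈ Set.Icc 0 (1 / 2)) (hq : q₀ + 1 ≤ q) (hqn : q + q₀ ≤ n / 2)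
    (hσ : σ = 1 ∨ σ = -1) :
    2.7 * (sineProd n θ₀ / (n ^ 3 * √n)) ≤
      ∫ θ in 0..(2 * π / n), sineProd n θ * (cos (q₀ * θ) + σ * cos (q * θ)) := by
  have hn₀ : 0 < n := by lia
  have hn' : (0 : ℝ) < n := by exact_mod_cast hn₀
  have hpos := h.sineProd_pos hn₀
  obtain ⟨hq₀₀, -⟩ := id hq₀
  refine (h.le_integral_mul hn (γ := 1.9 / n ^ 2) (by fun_prop) (by positivity) ?_ ?_).trans' ?_
  · rintro θ ⟨hθ, hθ'⟩
    rw [le_div_iff₀ hn'] at hθ'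
    have hcos := abs_cos_le_cos (x := q₀ * θ) (y := q * θ) (by positivity)
      (by gcongr; linarith) (by nlinarith)
    rcases hσ with rfl | rfl <;> linarith [abs_le.1 hcos]
  · rintro θ ⟨hθ, hθ'⟩
    have hpi := h.pi_div_le hn₀
    have hle := h.mul_div_two_le hn₀
    rw [div_le_iff₀ hn'] at hpi
    have hwin : (0.06 / (n : ℝ)) * n = 0.06 := div_mul_cancel₀ _ hn'.ne'
    have hnθ : 0.98 * π ≤ n * θ := by nlinarith [pi_gt_d4]
    have hnθ' : n * θ / 2 ≤ 2.682 := by nlinarith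
    have hθ₀ : 0 ≤ θ := (pos_of_mul_pos_right (hnθ.trans_lt' (by positivity)) hn'.le).le
    have hsub := add_cos_le_cos hn₀ hq₀₀ hq hqn hnθ (by linarith [pi_gt_three])
    have hadd := sub_cos_le_cos (q := q) hn hq₀ (by linarith) (by linarith) hθ₀ hnθ'
    rcases hσ with rfl | rfl <;> linarith
  · calc 2.7 * (sineProd n θ₀ / (n ^ 3 * √n)) ≤ 3.686 * (sineProd n θ₀ / (n ^ 3 * √n)) := by
          gcongr
          norm_num
      _ = 1.9 / n ^ 2 * (1.94 * sineProd n θ₀ / (n * √n)) := by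
        field_simp
        norm_num

lemma le_integral_sineProd (h : IsFirstArchMax n θ₀) (hn : 600 ≤ n) :
    1.94 * sineProd n θ₀ / (n * √n) ≤ ∫ θ in 0..(2 * π / n), sineProd n θ := by
  simpa only [one_mul, mul_one] using h.le_integral_mul hn (g := fun _ ↦ 1) continuous_const
    zero_le_one (fun _ _ ↦ zero_le_one) (fun _ _ ↦ le_rfl)

lemma mul_integral_sin_pow_le (h : IsFirstArchMax n θ₀) (hn : 600 ≤ n) (hq : n / 2 ≤ q) (α : ℝ) :
    sineProd n θ₀ * ∫ θ in 0..(2 * π / n), sin (q / 2 * θ + α) ^ (2 * (126 * n)) ≤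
      (∫ θ in 0..(2 * π / n), sineProd n θ) / 3 := by
  have hn₀ : 0 < n := by lia
  have hn' : (0 : ℝ) < n := by exact_mod_cast hn₀
  have hpos := h.sineProd_pos hn₀
  have hsinPow := integral_sin_mul_add_pow_le (α := α) (ω := q / 2) (l := 2 * π / n) (126 * n)
    (by linarith) (by positivity) (by
      rw [mul_div_assoc', le_div_iff₀ hn']
      nlinarith [pi_pos])
  calc sineProd n θ₀ * ∫ θ in 0..(2 * π / n), sin (q / 2 * θ + α) ^ (2 * (126 * n))
      ≤ sineProd n θ₀ * (1.94 / (n * √n) / 3) := by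
        gcongr
        exact hsinPow.trans (two_mul_sinPowMean_le hn₀)
    _ = 1.94 * sineProd n θ₀ / (n * √n) / 3 := by ring
    _ ≤ (∫ θ in 0..(2 * π / n), sineProd n θ) / 3 := by
      gcongr
      exact h.le_integral_sineProd hn

lemma sub_le_integral (h : IsFirstArchMax n θ₀) {m : ℕ} (hm : 0 < m)
    (hq₀ : q₀ ∈ Set.Icc 0 (1 / 2))
    (hα : ∀ θ, σ * cos (q * θ) = 1 - 2 * sin (q / 2 * θ + α) ^ 2) :
    (2 / m - π ^ 2 / (2 * n ^ 2)) * (∫ θ in 0..(2 * π / n), sineProd n θ) -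
        2 / m * sineProd n θ₀ * (∫ θ in 0..(2 * π / n), sin (q / 2 * θ + α) ^ (2 * m)) ≤
      ∫ θ in 0..(2 * π / n), sineProd n θ * (cos (q₀ * θ) + σ * cos (q * θ)) := by
  rw [← intervalIntegral.integral_const_mul, ← intervalIntegral.integral_const_mul,
    ← intervalIntegral.integral_sub (Continuous.intervalIntegrable (by fun_prop) _ _)
      (Continuous.intervalIntegrable (by fun_prop) _ _)]
  refine intervalIntegral.integral_mono_on (by positivity)
    (Continuous.intervalIntegrable (by fun_prop) _ _)
    (Continuous.intervalIntegrable (by fun_prop) _ _) fun θ hθ ↦ ?_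
  have hpow : 0 ≤ sin (q / 2 * θ + α) ^ (2 * m) := (even_two_mul m).pow_nonneg _
  have hmax : 2 / m * (sineProd n θ * sin (q / 2 * θ + α) ^ (2 * m)) ≤
      2 / m * (sineProd n θ₀ * sin (q / 2 * θ + α) ^ (2 * m)) := by
    gcongr
    exact h.2 hθ
  have hmul := mul_le_mul_of_nonneg_left (le_cos_add_one_sub hm hq₀ hθ (q / 2 * θ + α))
    (sineProd_nonneg hθ)
  rw [hα θ]
  linarith

lemma le_integral_of_div_two_le (h : IsFirstArchMax n θ₀) (hn : 600 ≤ n)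
    (hq₀ : q₀ ∈ Set.Icc 0 (1 / 2)) (hq : n / 2 ≤ q) (hσ : σ = 1 ∨ σ = -1) :
    2.7 * (sineProd n θ₀ / (n ^ 3 * √n)) ≤
      ∫ θ in 0..(2 * π / n), sineProd n θ * (cos (q₀ * θ) + σ * cos (q * θ)) := by
  have hn' : (600 : ℝ) ≤ n := by exact_mod_cast hn
  have : (0 : ℝ) < n := by linarith
  have hpos := h.sineProd_pos (by lia)
  obtain ⟨α, hα⟩ := exists_mul_cos_eq hσ q
  have hsub := h.sub_le_integral (m := 126 * n) (by lia) hq₀ hα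
  have hpow := h.mul_integral_sin_pow_le hn hq α
  have hmass := h.le_integral_sineProd hn
  set S := ∫ θ in 0..(2 * π / n), sineProd n θ
  set W := ∫ θ in 0..(2 * π / n), sin (q / 2 * θ + α) ^ (2 * (126 * n))
  have hcoeff : 1.4 / (n : ℝ) ^ 2 ≤ 2 / (126 * n : ℕ) * (2 / 3) - π ^ 2 / (2 * n ^ 2) := by
    push_cast
    rw [show 2 / (126 * (n : ℝ)) * (2 / 3) - π ^ 2 / (2 * n ^ 2) =
      (4 / 378 * n - π ^ 2 / 2) / n ^ 2 by field]
    gcongr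
    nlinarith [pi_lt_d4, pi_pos]
  have hS : 0 ≤ S := hmass.trans' (by positivity)
  calc 2.7 * (sineProd n θ₀ / (n ^ 3 * √n)) ≤ 2.716 * (sineProd n θ₀ / (n ^ 3 * √n)) := by
        gcongr
        norm_num
    _ = 1.4 / n ^ 2 * (1.94 * sineProd n θ₀ / (n * √n)) := by
      field_simp
      norm_num
    _ ≤ 1.4 / n ^ 2 * S := by gcongr
    _ ≤ (2 / (126 * n : ℕ) * (2 / 3) - π ^ 2 / (2 * n ^ 2)) * S := by gcongr
    _ = (2 / (126 * n : ℕ) - π ^ 2 / (2 * n ^ 2)) * S - 2 / (126 * n : ℕ) * (S / 3) := by ring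
    _ ≤ (2 / (126 * n : ℕ) - π ^ 2 / (2 * n ^ 2)) * S -
        2 / (126 * n : ℕ) * (sineProd n θ₀ * W) := by gcongr
    _ ≤ _ := by rwa [← mul_assoc]

end IsFirstArchMax

end InnerIntegral

section CentralPeak

open Real

variable {n : ℕ} {θ₀ σ : ℝ}

lemma cube_mul_exp_le {s : ℝ} (hs : 150 ≤ s) :
    (4 * s + 2) ^ 3 * exp (0.1605 * (4 * s + 2)) ≤ 0.1 * exp (0.7918 * s) := by
  have hlinear : 4 * s + 2 ≤ 602 * exp ((s - 150) / 150) := by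
    linarith [add_one_le_exp ((s - 150) / 150)]
  have hconst : (602 : ℝ) ^ 3 ≤ 0.1 * exp 22 := by
    calc (602 : ℝ) ^ 3 ≤ 0.1 * 2.7182 ^ 22 := by norm_num
      _ ≤ 0.1 * exp 1 ^ 22 := by
        gcongr
        linarith [exp_one_gt_d9]
      _ = 0.1 * exp 22 := by rw [exp_one_pow, Nat.cast_ofNat]
  calc (4 * s + 2) ^ 3 * exp (0.1605 * (4 * s + 2))
      ≤ (602 * exp ((s - 150) / 150)) ^ 3 * exp (0.1605 * (4 * s + 2)) := by gcongr
    _ = 602 ^ 3 * exp (0.662 * s - 2.679) := by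
      rw [mul_pow, ← exp_nat_mul, mul_assoc, ← exp_add]
      congr 2
      push_cast
      ring
    _ ≤ 0.1 * exp 22 * exp (0.7918 * s - 22) := by
      gcongr ?_ * exp ?_
      linarith
    _ = 0.1 * exp (0.7918 * s) := by rw [mul_assoc, ← exp_add, add_sub_cancel]

lemma IsFirstArchMax.exp_le (h : IsFirstArchMax n θ₀) (hn : 600 ≤ n) (hn' : Even n) :
    exp (0.1605 * n) ≤ 0.4 * (sineProd n θ₀ / (n ^ 3 * √n)) := by
  have hpos := h.sineProd_pos (by lia)
  have hmem : 2 * π / (n + n / 4 + 1 : ℕ) ∈ Set.Icc 0 (2 * π / n) := by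
    refine ⟨by positivity, ?_⟩
    gcongr
    lia
  have hpeak := (le_sineProd_two_pi_div hn hn').trans (h.2 hmem)
  have hs : (150 : ℝ) ≤ (n / 4 : ℕ) := by exact_mod_cast (by lia : 150 ≤ n / 4)
  have hns : (n : ℝ) ≤ 4 * (n / 4 : ℕ) + 2 := by
    obtain ⟨m, rfl⟩ := hn'
    exact_mod_cast (by lia : m + m ≤ 4 * ((m + m) / 4) + 2)
  set s : ℝ := ((n / 4 : ℕ) : ℝ)
  have hsqrt : √n ≤ 3 * √s := by
    rw [show (3 : ℝ) = √(3 ^ 2) from (sqrt_sq (by norm_num)).symm, ← sqrt_mul (by positivity)]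
    exact sqrt_le_sqrt (by linarith)
  rw [mul_div_assoc', le_div_iff₀ (by positivity)]
  calc exp (0.1605 * n) * (n ^ 3 * √n)
      ≤ exp (0.1605 * (4 * s + 2)) * ((4 * s + 2) ^ 3 * (3 * √s)) := by gcongr
    _ = (4 * s + 2) ^ 3 * exp (0.1605 * (4 * s + 2)) * (3 * √s) := by ring
    _ ≤ 0.1 * exp (0.7918 * s) * (3 * √s) := by
      gcongr ?_ * _
      exact cube_mul_exp_le hs
    _ ≤ 0.4 * (1.839 * √s * exp (0.7918 * s)) := by
      have : 0 ≤ √s * exp (0.7918 * s) := by positivity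
      linarith
    _ ≤ 0.4 * sineProd n θ₀ := by gcongr

lemma abs_integral_two_pi_div_pi_le (hn : 600 ≤ n) (hσ : σ = 1 ∨ σ = -1) (q₀ q : ℝ) :
    |∫ θ in (2 * π / n)..π, sineProd n θ * (cos (q₀ * θ) + σ * cos (q * θ))| ≤
      2 * π * exp (0.1605 * n) := by
  have hn' : (600 : ℝ) ≤ n := by exact_mod_cast hn
  have hle : 2 * π / n ≤ π := by
    rw [div_le_iff₀ (by linarith)]
    nlinarith [pi_pos]
  have hσ' : |σ| = 1 := (abs_eq zero_le_one).2 hσ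
  have hnorm := intervalIntegral.norm_integral_le_of_norm_le_const (a := 2 * π / n) (b := π)
    (f := fun θ ↦ sineProd n θ * (cos (q₀ * θ) + σ * cos (q * θ))) (C := exp (0.1605 * n) * 2) ?_
  · rw [norm_eq_abs, abs_of_nonneg (sub_nonneg.2 hle)] at hnorm
    calc _ ≤ _ := hnorm
      _ ≤ exp (0.1605 * n) * 2 * π := by
        gcongr
        exact sub_le_self _ (by positivity)
      _ = 2 * π * exp (0.1605 * n) := by ring
  · intro θ hθ
    rw [Set.uIoc_of_le hle] at hθ
    rw [norm_mul, norm_eq_abs, norm_eq_abs]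
    gcongr
    · exact abs_sineProd_le_exp_of_two_pi_div_le hn hθ.1.le hθ.2
    · calc |cos (q₀ * θ) + σ * cos (q * θ)| ≤ |cos (q₀ * θ)| + |σ * cos (q * θ)| := abs_add_le _ _
        _ ≤ 1 + 1 := by
          rw [abs_mul, hσ', one_mul]
          gcongr <;> exact abs_cos_le_one _
        _ = 2 := one_add_one_eq_two

theorem integral_sineProd_mul_pos (hn : 600 ≤ n) (hn' : Even n) {p₀ p : ℕ} (hp₀ : p₀ ≤ 1)
    (hp : p₀ + 2 ≤ p) (hσ : σ = 1 ∨ σ = -1) :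
    0 < ∫ θ in 0..π, sineProd n θ * (cos (p₀ / 2 * θ) + σ * cos (p / 2 * θ)) := by
  obtain ⟨θ₀, h⟩ := exists_isFirstArchMax n
  have hpos := h.sineProd_pos (by lia)
  have hmem : (p₀ / 2 : ℝ) ∈ Set.Icc 0 (1 / 2) := by
    refine ⟨by positivity, ?_⟩
    gcongr
    exact_mod_cast hp₀
  have hinner : 2.7 * (sineProd n θ₀ / (n ^ 3 * √n)) ≤
      ∫ θ in 0..(2 * π / n), sineProd n θ * (cos (p₀ / 2 * θ) + σ * cos (p / 2 * θ)) := by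
    rcases lt_or_ge p n with hpn | hpn
    · have hp₀p : (p₀ + 2 : ℝ) ≤ p := by exact_mod_cast hp
      have hp₀n : (p + p₀ : ℝ) ≤ n := by exact_mod_cast (by lia : p + p₀ ≤ n)
      exact h.le_integral_of_add_le hn hmem (by linarith) (by linarith) hσ
    · exact h.le_integral_of_div_two_le hn hmem (by gcongr) hσ
  have houter := neg_le_of_abs_le (abs_integral_two_pi_div_pi_le hn hσ (p₀ / 2) (p / 2))
  have hsmall : 2 * π * exp (0.1605 * n) ≤ 2.6 * (sineProd n θ₀ / (n ^ 3 * √n)) := by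
    calc 2 * π * exp (0.1605 * n) ≤ 2 * 3.25 * (0.4 * (sineProd n θ₀ / (n ^ 3 * √n))) := by
          gcongr
          · linarith [pi_lt_d2]
          · exact h.exp_le hn hn'
      _ = 2.6 * (sineProd n θ₀ / (n ^ 3 * √n)) := by ring
  have hX : 0 < sineProd n θ₀ / (n ^ 3 * √n) := by positivity
  rw [← intervalIntegral.integral_add_adjacent_intervals (b := 2 * π / n)
    (Continuous.intervalIntegrable (by fun_prop) _ _)
    (Continuous.intervalIntegrable (by fun_prop) _ _)]
  linarith

theorem hasStrictCentralPeak_of_600_le (hn : 600 ≤ n) (hn' : Even n) :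
    HasStrictCentralPeak n := by
  intro i hi
  have htri := two_mul_triangular n
  set i₀ := n * (n + 1) / 4
  obtain ⟨p₀, hp₀⟩ : ∃ p₀, triangular n = 2 * i₀ + p₀ := ⟨triangular n - 2 * i₀, by lia⟩
  obtain ⟨p, hp⟩ : ∃ p, triangular n = 2 * i + p := ⟨triangular n - 2 * i, by lia⟩
  have hfreq₀ : (triangular n / 2 - i₀ : ℝ) = p₀ / 2 := by
    rw [hp₀]
    push_cast
    ring
  have hfreq : (triangular n / 2 - i : ℝ) = p / 2 := by
    rw [hp]
    push_cast
    ring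
  have hcoeff₀ := integral_sineProd_mul_cos hn' (show i₀ ≤ triangular n by lia)
  have hcoeff := integral_sineProd_mul_cos hn' (show i ≤ triangular n by lia)
  rw [hfreq₀] at hcoeff₀
  rw [hfreq] at hcoeff
  have hpos {σ : ℝ} (hσ : σ = 1 ∨ σ = -1) :
      0 < (-1) ^ (n / 2) * π * a n i₀ + σ * ((-1) ^ (n / 2) * π * a n i) := by
    rw [← hcoeff₀, ← hcoeff, ← intervalIntegral.integral_const_mul,
      ← intervalIntegral.integral_add (Continuous.intervalIntegrable (by fun_prop) _ _)
        (Continuous.intervalIntegrable (by fun_prop) _ _)]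
    convert integral_sineProd_mul_pos hn hn' (p₀ := p₀) (p := p) (by lia) (by lia) hσ using 3
    ring
  have hadd := hpos (.inl rfl)
  have hsub := hpos (.inr rfl)
  have hlt : |(-1) ^ (n / 2) * π * (a n i : ℝ)| < |(-1) ^ (n / 2) * π * (a n i₀ : ℝ)| :=
    (abs_lt.2 ⟨by linarith, by linarith⟩).trans_le (le_abs_self _)
  rw [abs_mul, abs_mul _ (a n i₀ : ℝ)] at hlt
  exact_mod_cast lt_of_mul_lt_mul_left hlt (abs_nonneg _)

end CentralPeak

theorem stmt_7_general (n : ℕ) (heven : Even n) (h1 : 34 ≤ n) :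
    L n = n * (n + 1) / 4 ∧ (a n ((n * (n + 1) + 3) / 4)).natAbs = M n := by
  have hpeak : HasStrictCentralPeak n := by
    rcases le_total n 600 with h | h
    · exact hasStrictCentralPeak_of_le_600 heven h1 h
    · exact hasStrictCentralPeak_of_600_le h heven
  exact ⟨hpeak.L_eq heven, hpeak.natAbs_a_ceil heven⟩

/-- For even `n` with `34 ≤ n ≤ 75000`, the least index attaining the maximum
absolute coefficient is `⌊n(n+1)/4⌋`, and `|a(n, ⌈n(n+1)/4⌉)| = M n` as well. -/
theorem stmt_7 (n : ℕ) (heven : Even n) (h1 : 34 ≤ n) (h2 : n ≤ 75000) :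
    L n = n * (n + 1) / 4 ∧ (a n ((n * (n + 1) + 3) / 4)).natAbs = M n :=
  stmt_7_general n heven h1
end
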